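/- In the unitary case, the subgroup Γ = {a·σ(a)^{-1} : a ∈ (E'/E)_1} has index two in the group (E'/E)_1 ∩ (E'/F')_1, and the two G^j(E)-orbits in X^j are {x ∈ X^j : det x ∈ Γ} = G^j(E)·I_n and {x ∈ X^j : det x ∉ Γ}. -/

import Mathlib

open Matrix

namespace GaloisPair

variable {E' : Type} [Field E']

/-- `g ∈ G^j(E) = {g ∈ GL_n(E') : τ(g)ᵀ j g = j}`. -/
def Gj {n : ℕ} (τ : E' → E') (j g : Matrix (Fin n) (Fin n) E') : Prop :=
  IsUnit g ∧ (g.map τ)ᵀ * j * g = j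

/-- `x ∈ X^j = {x ∈ G^j(E) : x·σ(x) = 1}`. -/
def Xj {n : ℕ} (σ τ : E' → E') (j x : Matrix (Fin n) (Fin n) E') : Prop :=
  Gj τ j x ∧ x * x.map σ = 1

/-- `x'` lies in the `G^j(E)`-orbit of `x` for twisted conjugation `g·x = g x σ(g)⁻¹`. -/
def orbGj {n : ℕ} (σ τ : E' → E') (j x x' : Matrix (Fin n) (Fin n) E') : Prop :=
  ∃ g, Gj τ j g ∧ x' = g * x * (g.map σ)⁻¹

/-- `y ∈ Y_n(F)`: invertible, entries fixed by `σ` (i.e. in `F'`), and `τ(y)ᵀ = ε • y`. -/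
def inYnF {n : ℕ} (σ τ : E' → E') (ε : E') (y : Matrix (Fin n) (Fin n) E') : Prop :=
  IsUnit y ∧ (∀ a b, σ (y a b) = y a b) ∧ (y.map τ)ᵀ = ε • y

/-- The subgroup `Γ = {a·σ(a)⁻¹ : a ∈ (E'/E)₁}` of `E'^×`, where
`(E'/E)₁ = {a : a·τ(a) = 1}`. -/
def Gam (σ τ : E' → E') : Set E' := {b | ∃ a : E', a * τ a = 1 ∧ b = a * (σ a)⁻¹}

/-- The group `(E'/E)₁ ∩ (E'/F')₁ = {a : a·τ(a) = 1 ∧ a·σ(a) = 1}`. -/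
def oneInter (σ τ : E' → E') : Set E' := {a | a * τ a = 1 ∧ a * σ a = 1}

end GaloisPair

open GaloisPair

theorem grp_idx {A : Type*} [CommGroup A] (B : Subgroup A) (hB : B.index ≠ 0)
    (h2 : ∀ b ∈ B, b ^ 2 = 1 → b = 1) (hk : Nat.card (powMonoidHom 2 : A →* A).ker = 2) :
    (powMonoidHom 2 : A →* A).range.index = 2 * (B.map (powMonoidHom 2)).relIndex B := by
  set f : A →* A := powMonoidHom 2 with hf
  have e1 := Subgroup.index_map B f
  have hle : B.map f ≤ B := by
    rintro _ ⟨b, hb, rfl⟩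
    exact B.pow_mem hb 2
  have e2 := Subgroup.relIndex_mul_index hle
  have e3 := Subgroup.relIndex_mul_index (le_sup_left : B ≤ B ⊔ f.ker)
  have e4 : B.relIndex (B ⊔ f.ker) = 2 := by
    rw [sup_comm, Subgroup.relIndex_sup_right, ← Subgroup.inf_relIndex_right]
    have : B ⊓ f.ker = ⊥ := by
      rw [eq_bot_iff]
      rintro b ⟨hb, hb'⟩
      exact h2 b hb hb'
    rw [this, Subgroup.relIndex_bot_left, hk]
  rw [e4] at e3
  have h0 : (B ⊔ f.ker).index ≠ 0 := by
    intro h; apply hB; rw [← e3, h]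
  rw [← e2, ← e3] at e1
  apply Nat.eq_of_mul_eq_mul_left (Nat.pos_of_ne_zero h0)
  linarith


theorem unit_sq_one {O : Type*} [CommRing O] [IsDomain O] (u : Oˣ) : u ^ 2 = 1 ↔ u = 1 ∨ u = -1 := by
  rw [Units.ext_iff, Units.ext_iff, Units.ext_iff]
  simp only [Units.val_pow_eq_pow_val, Units.val_one, Units.val_neg]
  exact sq_eq_one_iff


theorem ker_sq_card {O : Type*} [CommRing O] [IsDomain O] (h2 : (2 : O) ≠ 0) :
    Nat.card (powMonoidHom 2 : Oˣ →* Oˣ).ker = 2 := by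
  have hs : ((powMonoidHom 2 : Oˣ →* Oˣ).ker : Set Oˣ) = {1, -1} := by
    ext u
    simp only [SetLike.mem_coe, MonoidHom.mem_ker, powMonoidHom_apply, Set.mem_insert_iff,
      Set.mem_singleton_iff]
    exact unit_sq_one u
  have hne : (1 : Oˣ) ≠ -1 := by
    intro h
    have := congrArg Units.val h
    simp only [Units.val_one, Units.val_neg] at this
    apply h2
    linear_combination this
  have : Nat.card (((powMonoidHom 2 : Oˣ →* Oˣ).ker : Set Oˣ)) = 2 := by
    rw [hs, Nat.card_coe_set_eq, Set.ncard_pair hne]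
  exact this

theorem ring_idx {O : Type*} [CommRing O] [IsDomain O] [IsLocalRing O] (p : O) (hp0 : p ≠ 0)
    (hp : ¬ IsUnit p) (h2 : (2 : O) ≠ 0) (hfin : Finite (O ⧸ Ideal.span {2 * p}))
    (hens : ∀ t : O, ∃ x : O, x + p * x ^ 2 = t) :
    (powMonoidHom 2 : Oˣ →* Oˣ).range.index = 2 * Nat.card (O ⧸ Ideal.span {(2 : O)}) := by
  let B : Subgroup Oˣ := (Units.map (Ideal.Quotient.mk (Ideal.span {2 * p})).toMonoidHom).ker
  have hBm : ∀ u : Oˣ, u ∈ B ↔ ∃ x, (u : O) = 1 + 2 * p * x := by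
    intro u
    have : u ∈ B ↔ Ideal.Quotient.mk (Ideal.span {2 * p}) (u : O) = 1 := by
      simp only [B, MonoidHom.mem_ker, Units.ext_iff]
      rfl
    rw [this, ← map_one (Ideal.Quotient.mk (Ideal.span {2 * p})), Ideal.Quotient.eq,
      Ideal.mem_span_singleton]
    constructor
    · rintro ⟨x, hx⟩; exact ⟨x, by linear_combination hx⟩
    · rintro ⟨x, hx⟩; exact ⟨x, by linear_combination hx⟩
  have hcu : ∀ x : O, IsUnit (1 + 2 * p * x) := by
    intro x
    by_contra h
    have h1 : 1 + 2 * p * x ∈ IsLocalRing.maximalIdeal O := h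
    have h3 : p ∈ IsLocalRing.maximalIdeal O := hp
    have : (1 : O) ∈ IsLocalRing.maximalIdeal O := by
      have := Ideal.sub_mem _ h1 (Ideal.mul_mem_left _ (2 * x) h3)
      convert this using 1; ring
    exact this isUnit_one
  have hBi : B.index ≠ 0 := by
    have : Finite (O ⧸ Ideal.span {2 * p})ˣ := inferInstance
    rw [show B = _ from rfl, Subgroup.index_ker]
    exact Nat.card_pos.ne'
  have hB2 : ∀ b ∈ B, b ^ 2 = 1 → b = 1 := by
    intro b hb hb2
    rcases (unit_sq_one b).1 hb2 with h | h
    · exact h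
    · exfalso
      obtain ⟨x, hx⟩ := (hBm b).1 hb
      rw [h] at hx
      simp only [Units.val_neg, Units.val_one] at hx
      have : (2 : O) * (1 + p * x) = 0 := by linear_combination -hx
      rcases mul_eq_zero.1 this with h' | h'
      · exact h2 h'
      · apply hp
        exact IsUnit.of_mul_eq_one (-x) (by linear_combination -h')
  rw [grp_idx B hBi hB2 (ker_sq_card h2)]
  congr 1
  have hsq : ∀ u : Oˣ, u ∈ B.map (powMonoidHom 2) ↔ ∃ x, (u : O) = 1 + 4 * p * x := by
    intro u
    constructor
    · rintro ⟨b, hb, rfl⟩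
      obtain ⟨x, hx⟩ := (hBm b).1 hb
      refine ⟨x + p * x ^ 2, ?_⟩
      simp only [powMonoidHom_apply, Units.val_pow_eq_pow_val, hx]
      ring
    · rintro ⟨t, ht⟩
      obtain ⟨x, hx⟩ := hens t
      refine ⟨(hcu x).unit, (hBm _).2 ⟨x, rfl⟩, ?_⟩
      ext
      simp only [powMonoidHom_apply, Units.val_pow_eq_pow_val, ht, ← hx, IsUnit.unit_spec]
      ring
  have hch : ∀ b : B, ∃ x, ((b : Oˣ) : O) = 1 + 2 * p * x := fun b => (hBm b).1 b.2
  choose f hf using hch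
  have h2p : (2 * p : O) ≠ 0 := mul_ne_zero h2 hp0
  let g : B →* Multiplicative (O ⧸ Ideal.span {(2 : O)}) :=
    { toFun := fun b => Multiplicative.ofAdd (Ideal.Quotient.mk _ (f b))
      map_one' := by
        rw [← ofAdd_zero]
        congr 1
        have : f 1 = 0 := by
          have := hf 1
          simp only [OneMemClass.coe_one, Units.val_one] at this
          have h' : 2 * p * f 1 = 0 := by linear_combination -this
          exact (mul_eq_zero.1 h').resolve_left h2p
        rw [this, map_zero]
      map_mul' := by
        intro a b
        rw [← ofAdd_add, ← map_add]
        congr 1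
        rw [Ideal.Quotient.eq, Ideal.mem_span_singleton]
        refine ⟨p * f a * f b, ?_⟩
        have := hf (a * b)
        simp only [Subgroup.coe_mul, Units.val_mul, hf a, hf b] at this
        apply mul_left_cancel₀ h2p
        linear_combination -this }
  have hker : (B.map (powMonoidHom 2)).subgroupOf B = g.ker := by
    ext b
    rw [Subgroup.mem_subgroupOf, hsq, MonoidHom.mem_ker]
    change _ ↔ Multiplicative.ofAdd (Ideal.Quotient.mk _ (f b)) = Multiplicative.ofAdd 0
    rw [Multiplicative.ofAdd.injective.eq_iff, Ideal.Quotient.eq_zero_iff_mem,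
      Ideal.mem_span_singleton, hf b]
    constructor
    · rintro ⟨x, hx⟩
      exact ⟨x, mul_left_cancel₀ h2p (by linear_combination hx)⟩
    · rintro ⟨x, hx⟩
      exact ⟨x, by rw [hx]; ring⟩
  have hsurj : Function.Surjective g := by
    intro y
    obtain ⟨x, hx⟩ := Ideal.Quotient.mk_surjective (Multiplicative.toAdd y)
    refine ⟨⟨(hcu x).unit, (hBm _).2 ⟨x, rfl⟩⟩, ?_⟩
    change Multiplicative.ofAdd (Ideal.Quotient.mk _ (f _)) = _
    have := hf ⟨(hcu x).unit, (hBm _).2 ⟨x, rfl⟩⟩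
    simp only [IsUnit.unit_spec] at this
    have h' : f ⟨(hcu x).unit, (hBm _).2 ⟨x, rfl⟩⟩ = x :=
      mul_left_cancel₀ h2p (by linear_combination -this)
    rw [h', hx]; rfl
  rw [Subgroup.relIndex, hker, Subgroup.index_ker, MonoidHom.range_eq_top.2 hsurj, Subgroup.card_top]
  rfl

theorem field_idx {O : Type*} [CommRing O] [IsDomain O] [IsDiscreteValuationRing O]
    (L : Type*) [Field L] [Algebra O L] [IsFractionRing O L] :
    (powMonoidHom 2 : Lˣ →* Lˣ).range.index = 2 * (powMonoidHom 2 : Oˣ →* Oˣ).range.index := by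
  obtain ⟨π, hπ⟩ := IsDiscreteValuationRing.exists_irreducible O
  have hinj : Function.Injective (algebraMap O L) := IsFractionRing.injective O L
  let ι : Oˣ →* Lˣ := Units.map (algebraMap O L).toMonoidHom
  have hι : Function.Injective ι := Units.map_injective hinj
  have hιv : ∀ u : Oˣ, ((ι u : Lˣ) : L) = algebraMap O L u := fun u => rfl
  have hπ0 : algebraMap O L π ≠ 0 := by
    rw [Ne, FaithfulSMul.algebraMap_eq_zero_iff]; exact hπ.ne_zero
  let P : Lˣ := Units.mk0 _ hπ0
  have hP : (P : L) = algebraMap O L π := rfl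
  have hdbl : ∀ l : ℤ, P ^ (2 * l) = (P ^ l) ^ 2 := fun l => by
    rw [two_mul, _root_.zpow_add, sq]
  have hrep : ∀ x : Lˣ, ∃ (u : Oˣ) (k : ℤ), x = ι u * P ^ k := by
    intro x
    obtain ⟨a, b, hb, hab⟩ := IsFractionRing.div_surjective (A := O) (x : L)
    have hb0 : b ≠ 0 := nonZeroDivisors.ne_zero hb
    have ha0 : a ≠ 0 := by
      rintro rfl; apply x.ne_zero; rw [← hab]; simp
    obtain ⟨m, u, rfl⟩ := IsDiscreteValuationRing.eq_unit_mul_pow_irreducible ha0 hπ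
    obtain ⟨n, v, rfl⟩ := IsDiscreteValuationRing.eq_unit_mul_pow_irreducible hb0 hπ
    refine ⟨u * v⁻¹, m - n, ?_⟩
    ext
    rw [← hab, map_mul ι, map_inv ι, _root_.zpow_sub, zpow_natCast, zpow_natCast]
    simp only [Units.val_mul, Units.val_inv_eq_inv_val, hιv, Units.val_pow_eq_pow_val, hP, map_mul,
      map_pow]
    rw [div_eq_mul_inv, mul_inv]; ring
  have hPn : ∀ (n : ℕ) (u : Oˣ), P ^ n = ι u → n = 0 := by
    intro n u h
    by_contra hn
    have := congrArg Units.val h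
    rw [Units.val_pow_eq_pow_val, hP, hιv, ← map_pow] at this
    have h' := hinj this
    apply hπ.not_isUnit
    have : IsUnit (π ^ n) := by rw [h']; exact u.isUnit
    exact (isUnit_pow_iff hn).1 this
  have hPz : ∀ (k : ℤ) (u : Oˣ), P ^ k = ι u → k = 0 := by
    intro k u h
    obtain ⟨n, rfl | rfl⟩ := k.eq_nat_or_neg
    · rw [zpow_natCast] at h; simp [hPn n u h]
    · rw [_root_.zpow_neg, zpow_natCast, inv_eq_iff_eq_inv, ← map_inv] at h; simp [hPn n _ h]
  set S : Subgroup Lˣ := (powMonoidHom 2 : Lˣ →* Lˣ).range with hS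
  have hSm : ∀ x, x ∈ S ↔ ∃ y, y ^ 2 = x := fun x => Iff.rfl
  have hM : ∀ (u : Oˣ) (k : ℤ), ι u * P ^ k ∈ S ⊔ ι.range ↔ Even k := by
    intro u k
    rw [Subgroup.mem_sup]
    constructor
    · rintro ⟨s, ⟨y, rfl⟩, _, ⟨v, rfl⟩, h⟩
      obtain ⟨w, l, rfl⟩ := hrep y
      have h3 : P ^ (k - 2 * l) = ι (w ^ 2 * v * u⁻¹) := by
        have h4 : P ^ k = (ι u)⁻¹ * ((ι w) ^ 2 * (P ^ l) ^ 2 * ι v) := by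
          rw [← mul_pow]; exact eq_inv_mul_of_mul_eq h.symm
        rw [_root_.zpow_sub, hdbl, h4, map_mul, map_mul, map_inv, map_pow, mul_inv_eq_iff_eq_mul]
        ac_rfl
      have := hPz _ _ h3
      exact ⟨l, by omega⟩
    · rintro ⟨l, rfl⟩
      exact ⟨(P ^ l) ^ 2, ⟨P ^ l, rfl⟩, ι u, ⟨u, rfl⟩, by rw [_root_.zpow_add, sq, mul_comm]⟩
  have h2 : (S ⊔ ι.range).index = 2 := by
    rw [Subgroup.index_eq_two_iff]
    refine ⟨P, fun b => ?_⟩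
    obtain ⟨u, k, rfl⟩ := hrep b
    rw [mul_assoc, ← _root_.zpow_add_one, hM, hM]
    rcases Int.even_or_odd k with h | h
    · exact Or.inr ⟨h, by simpa [Int.even_add_one] using h⟩
    · exact Or.inl ⟨h.add_one, by simpa using h⟩
  have e1 := Subgroup.relIndex_mul_index (le_sup_left : S ≤ S ⊔ ι.range)
  rw [h2, Subgroup.relIndex_sup_left, ← Subgroup.index_comap] at e1
  rw [← e1, mul_comm]
  congr 2
  ext u
  rw [Subgroup.mem_comap, hSm]
  constructor
  · rintro ⟨y, hy⟩
    obtain ⟨w, l, rfl⟩ := hrep y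
    have h3 : P ^ (2 * l) = ι (u * (w ^ 2)⁻¹) := by
      rw [map_mul, ← hy, map_inv, map_pow, mul_pow, hdbl, eq_mul_inv_iff_mul_eq, mul_comm]
    have := hPz _ _ h3
    have hl : l = 0 := by omega
    subst hl
    refine ⟨w, hι ?_⟩
    simpa using hy
  · rintro ⟨y, rfl⟩
    exact ⟨ι y, by simp⟩


section padic
variable (p : ℕ) [hp : Fact p.Prime] (L : Type) [Field L] [Algebra ℚ_[p] L]
  [FiniteDimensional ℚ_[p] L]

theorem mem_int_iff [Algebra ℤ_[p] L] [IsScalarTower ℤ_[p] ℚ_[p] L] (x : L) :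
    x ∈ integralClosure ℤ_[p] L ↔ spectralNorm ℚ_[p] L x ≤ 1 := by
  have hint : IsIntegral ℚ_[p] x := Algebra.IsIntegral.isIntegral x
  rw [spectralNorm, spectralValue_le_one_iff (minpoly.monic hint), mem_integralClosure_iff]
  constructor
  · intro h n
    rw [minpoly.isIntegrallyClosed_eq_field_fractions' ℚ_[p] h, Polynomial.coeff_map]
    exact PadicInt.norm_le_one _
  · intro h
    have hl : minpoly ℚ_[p] x ∈ Polynomial.lifts (algebraMap ℤ_[p] ℚ_[p]) := by
      rw [Polynomial.lifts_iff_coeff_lifts]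
      intro n
      exact ⟨⟨_, h n⟩, rfl⟩
    obtain ⟨q, hq, hd, hm⟩ := Polynomial.lifts_and_natDegree_eq_and_monic hl (minpoly.monic hint)
    refine ⟨q, hm, ?_⟩
    have := minpoly.aeval ℚ_[p] x
    rw [← hq, Polynomial.aeval_map_algebraMap] at this
    exact this

theorem hens_L (t : L) (ht : spectralNorm ℚ_[p] L t ≤ 1) :
    ∃ x : L, spectralNorm ℚ_[p] L x ≤ 1 ∧ x + p * x ^ 2 = t := by
  let : NormedField L := spectralNorm.normedField ℚ_[p] L
  let : NormedAlgebra ℚ_[p] L := spectralNorm.normedAlgebra ℚ_[p] L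
  have hn : ∀ x : L, ‖x‖ = spectralNorm ℚ_[p] L x := fun x => rfl
  have : CompleteSpace L := FiniteDimensional.complete ℚ_[p] L
  have : IsUltrametricDist L :=
    IsUltrametricDist.isUltrametricDist_of_isNonarchimedean_norm isNonarchimedean_spectralNorm
  have hpn : ‖(p : L)‖ = (p : ℝ)⁻¹ := by
    rw [← map_natCast (algebraMap ℚ_[p] L) p, norm_algebraMap', Padic.norm_p]
  have hp2 : (p : ℝ)⁻¹ ≤ 2⁻¹ := by
    gcongr; exact_mod_cast hp.out.two_le
  simp only [← hn] at ht ⊢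
  let f : L → L := fun x => t - p * x ^ 2
  have hs : IsComplete (Metric.closedBall (0 : L) 1) := Metric.isClosed_closedBall.isComplete
  have hmaps : Set.MapsTo f (Metric.closedBall (0 : L) 1) (Metric.closedBall (0 : L) 1) := by
    intro x hx
    rw [mem_closedBall_zero_iff] at hx ⊢
    change ‖t - p * x ^ 2‖ ≤ 1
    rw [sub_eq_add_neg]
    refine (IsUltrametricDist.norm_add_le_max _ _).trans (max_le ht ?_)
    rw [norm_neg, norm_mul, norm_pow, hpn]
    have : ‖x‖ ^ 2 ≤ 1 := pow_le_one₀ (norm_nonneg _) hx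
    nlinarith [sq_nonneg ‖x‖]
  have hc : ContractingWith (2⁻¹ : NNReal) (hmaps.restrict f _ _) := by
    refine ⟨by rw [← NNReal.coe_lt_coe]; norm_num, LipschitzWith.of_dist_le_mul ?_⟩
    rintro ⟨x, hx⟩ ⟨y, hy⟩
    rw [mem_closedBall_zero_iff] at hx hy
    rw [Subtype.dist_eq, Subtype.dist_eq]
    simp only [Set.MapsTo.val_restrict_apply, dist_eq_norm, f]
    have : t - p * x ^ 2 - (t - p * y ^ 2) = - (p * ((x + y) * (x - y))) := by ring
    rw [this, norm_neg, norm_mul, norm_mul, hpn]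
    have h1 : ‖x + y‖ ≤ 1 := (IsUltrametricDist.norm_add_le_max _ _).trans (max_le hx hy)
    have h0 := norm_nonneg (x - y)
    have h00 := norm_nonneg (x + y)
    push_cast
    apply mul_le_mul hp2 _ (by positivity) (by norm_num)
    nlinarith
  obtain ⟨y, hy, hfix, -⟩ := hc.exists_fixedPoint' hs hmaps (x := 0) (by simp) (edist_ne_top _ _)
  refine ⟨y, by simpa using hy, ?_⟩
  have : t - p * y ^ 2 = y := hfix
  linear_combination -this

theorem tf_L [Algebra ℤ_[p] L] [IsScalarTower ℤ_[p] ℚ_[p] L] : Module.IsTorsionFree ℤ_[p] L := by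
  rw [Module.isTorsionFree_iff_algebraMap_injective, IsScalarTower.algebraMap_eq ℤ_[p] ℚ_[p] L]
  exact (algebraMap ℚ_[p] L).injective.comp (IsFractionRing.injective _ _)

theorem card_quot [Algebra ℤ_[p] L] [IsScalarTower ℤ_[p] ℚ_[p] L] (r : ℕ) :
    Nat.card (integralClosure ℤ_[p] L ⧸ Ideal.span {(r : integralClosure ℤ_[p] L)}) =
      Nat.card (ℤ_[p] ⧸ Ideal.span {(r : ℤ_[p])}) ^ Module.finrank ℚ_[p] L := by
  have : Module.IsTorsionFree ℤ_[p] L := tf_L p L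
  have : Module.Free ℤ_[p] (integralClosure ℤ_[p] L) :=
    IsIntegralClosure.module_free ℤ_[p] ℚ_[p] L (integralClosure ℤ_[p] L)
  have : IsNoetherian ℤ_[p] (integralClosure ℤ_[p] L) :=
    IsIntegralClosure.isNoetherian ℤ_[p] ℚ_[p] L (integralClosure ℤ_[p] L)
  have hr := IsIntegralClosure.rank ℤ_[p] ℚ_[p] L (integralClosure ℤ_[p] L)
  let b := Module.finBasis ℤ_[p] (integralClosure ℤ_[p] L)
  let f : integralClosure ℤ_[p] L →ₗ[ℤ_[p]]
      (Fin (Module.finrank ℤ_[p] (integralClosure ℤ_[p] L)) → ℤ_[p] ⧸ Ideal.span {(r : ℤ_[p])}) :=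
    (LinearMap.pi fun i => (Submodule.mkQ _).comp (LinearMap.proj i)).comp b.equivFun.toLinearMap
  have hf : ∀ x i, f x i = Ideal.Quotient.mk (Ideal.span {(r : ℤ_[p])}) (b.equivFun x i) :=
    fun x i => rfl
  have hsurj : Function.Surjective f := by
    intro y
    choose z hz using fun i => Ideal.Quotient.mk_surjective (y i)
    refine ⟨b.equivFun.symm z, ?_⟩
    ext i
    rw [hf, LinearEquiv.apply_symm_apply, hz]
  have hker : (Ideal.span {(r : integralClosure ℤ_[p] L)}).restrictScalars ℤ_[p] =
      LinearMap.ker f := by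
    ext x
    rw [Submodule.restrictScalars_mem, Ideal.mem_span_singleton, LinearMap.mem_ker]
    constructor
    · rintro ⟨y, rfl⟩
      ext i
      rw [hf, ← nsmul_eq_mul, map_nsmul, Pi.smul_apply, Pi.zero_apply,
        Ideal.Quotient.eq_zero_iff_mem, Ideal.mem_span_singleton, nsmul_eq_mul]
      exact ⟨_, rfl⟩
    · intro h
      have : ∀ i, ∃ c, b.equivFun x i = r * c := by
        intro i
        have := congrFun h i
        rw [hf, Pi.zero_apply, Ideal.Quotient.eq_zero_iff_mem, Ideal.mem_span_singleton] at this
        exact this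
      choose c hc using this
      refine ⟨b.equivFun.symm c, b.equivFun.injective ?_⟩
      ext i
      have : (r : integralClosure ℤ_[p] L) * b.equivFun.symm c = r • b.equivFun.symm c :=
        (nsmul_eq_mul _ _).symm
      rw [hc, this, map_nsmul, Pi.smul_apply, LinearEquiv.apply_symm_apply, nsmul_eq_mul]
  have e := (Submodule.Quotient.restrictScalarsEquiv ℤ_[p]
    (Ideal.span {(r : integralClosure ℤ_[p] L)})).symm.trans
    ((Submodule.quotEquivOfEq _ _ hker).trans (f.quotKerEquivOfSurjective hsurj))
  rw [Nat.card_congr e.toEquiv, Nat.card_fun, Nat.card_fin, hr]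

theorem card_quot_Zp (r : ℕ) (hr : r ≠ 0) : Nat.card (ℤ_[p] ⧸ Ideal.span {(r : ℤ_[p])}) ≠ 0 := by
  have hr' : (r : ℤ_[p]) ≠ 0 := by exact_mod_cast hr
  have hs : Ideal.span {(r : ℤ_[p])} =
      RingHom.ker (PadicInt.toZModPow (p := p) (r : ℤ_[p]).valuation) := by
    rw [PadicInt.ker_toZModPow, Ideal.span_singleton_eq_span_singleton]
    conv_lhs => rw [PadicInt.unitCoeff_spec hr']
    exact associated_unit_mul_left _ _ (Units.isUnit _)
  have : NeZero (p ^ (r : ℤ_[p]).valuation) := ⟨pow_ne_zero _ hp.out.ne_zero⟩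
  have hi := RingHom.kerLift_injective (PadicInt.toZModPow (p := p) (r : ℤ_[p]).valuation)
  have hfin := Finite.of_injective _ hi
  rw [← hs] at hfin
  exact Nat.card_pos.ne'

theorem sq_index : (powMonoidHom 2 : Lˣ →* Lˣ).range.index =
    4 * Nat.card (ℤ_[p] ⧸ Ideal.span {((2 : ℕ) : ℤ_[p])}) ^ Module.finrank ℚ_[p] L := by
  let : Algebra ℤ_[p] L := ((algebraMap ℚ_[p] L).comp (algebraMap ℤ_[p] ℚ_[p])).toAlgebra
  have : IsScalarTower ℤ_[p] ℚ_[p] L := IsScalarTower.of_algebraMap_eq fun x => rfl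
  have : Module.IsTorsionFree ℤ_[p] L := tf_L p L
  have : CharZero L := charZero_of_injective_algebraMap (algebraMap ℚ_[p] L).injective
  let O := integralClosure ℤ_[p] L
  have : IsFractionRing O L := integralClosure.isFractionRing_of_finite_extension ℚ_[p] L
  have : IsNoetherianRing O := IsIntegralClosure.isNoetherianRing ℤ_[p] ℚ_[p] L O
  have hV : ValuationRing O := by
    rw [ValuationRing.iff_isInteger_or_isInteger O L]
    intro x
    have hm : spectralNorm ℚ_[p] L x ≤ 1 ∨ spectralNorm ℚ_[p] L x⁻¹ ≤ 1 := by
      let : NormedField L := spectralNorm.normedField ℚ_[p] L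
      change ‖x‖ ≤ 1 ∨ ‖x⁻¹‖ ≤ 1
      rw [norm_inv]
      rcases le_total ‖x‖ 1 with h | h
      · exact Or.inl h
      · exact Or.inr (inv_le_one_of_one_le₀ h)
    rcases hm with h | h
    · exact Or.inl ⟨⟨x, (mem_int_iff p L x).2 h⟩, rfl⟩
    · exact Or.inr ⟨⟨x⁻¹, (mem_int_iff p L _).2 h⟩, rfl⟩
  have hpn : spectralNorm ℚ_[p] L ((p : L)⁻¹) = p := by
    let : NormedField L := spectralNorm.normedField ℚ_[p] L
    let : NormedAlgebra ℚ_[p] L := spectralNorm.normedAlgebra ℚ_[p] L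
    change ‖(p : L)⁻¹‖ = _
    rw [norm_inv, ← map_natCast (algebraMap ℚ_[p] L) p, norm_algebraMap', Padic.norm_p, inv_inv]
  have hpnu : ¬ IsUnit (p : O) := by
    intro h
    obtain ⟨y, hy⟩ := h.exists_right_inv
    have h1 : (p : L) * (y : L) = 1 := by
      have := congrArg (fun z : O => (z : L)) hy
      simpa using this
    have h2 : (y : L) = (p : L)⁻¹ := eq_inv_of_mul_eq_one_right h1
    have h3 := (mem_int_iff p L _).1 y.2
    rw [h2, hpn] at h3
    have : (1 : ℝ) < p := by exact_mod_cast hp.out.one_lt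
    linarith
  have hp0 : (p : O) ≠ 0 := by exact_mod_cast hp.out.ne_zero
  have hDVR : IsDiscreteValuationRing O := by
    have : ¬ IsField O := by
      intro h
      obtain ⟨y, hy⟩ := h.mul_inv_cancel hp0
      exact hpnu (IsUnit.of_mul_eq_one _ hy)
    exact ((IsDiscreteValuationRing.TFAE O this).out 0 1).2 hV
  have h20 : (2 : O) ≠ 0 := fun h => two_ne_zero (α := L) (by simpa using congrArg (fun z : O => (z : L)) h)
  have hfin : Finite (O ⧸ Ideal.span {2 * (p : O)}) := by
    have h := card_quot p L (2 * p)
    have h' : Nat.card (O ⧸ Ideal.span {((2 * p : ℕ) : O)}) ≠ 0 := by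
      rw [h]
      exact pow_ne_zero _ (card_quot_Zp p _ (mul_ne_zero two_ne_zero hp.out.ne_zero))
    have h3 := (Nat.card_ne_zero.1 h').2
    rwa [Nat.cast_mul, Nat.cast_ofNat] at h3
  have hens : ∀ t : O, ∃ x : O, x + p * x ^ 2 = t := by
    intro t
    obtain ⟨x, hx, hxt⟩ := hens_L p L t ((mem_int_iff p L _).1 t.2)
    refine ⟨⟨x, (mem_int_iff p L x).2 hx⟩, Subtype.ext ?_⟩
    simpa using hxt
  rw [field_idx (O := O) L, ring_idx (p : O) hp0 hpnu h20 hfin hens]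
  have h := card_quot p L 2
  rw [Nat.cast_ofNat] at h
  rw [h]
  ring

theorem sq_exists : ∃ s : L, s ^ 2 = 1 - 4 * p := by
  obtain ⟨x, -, hx⟩ := hens_L p L (-1) (by
    rw [spectralNorm_neg (Algebra.IsAlgebraic.isAlgebraic _), spectralNorm_one])
  exact ⟨1 + 2 * p * x, by linear_combination 4 * p * hx⟩
end padic

section quad
open QuadraticAlgebra

theorem quad_idx (F : Type) [Field F] [CharZero F] (d : F) [hd : Fact (∀ r : F, r ^ 2 ≠ d + 0 * r)]
    (k : ℕ) (hk : k ≠ 0)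
    (hF : (powMonoidHom 2 : Fˣ →* Fˣ).range.index = 4 * k)
    (hK : (powMonoidHom 2 : (QuadraticAlgebra F d 0)ˣ →* (QuadraticAlgebra F d 0)ˣ).range.index
      = 4 * k ^ 2) :
    (Units.map (QuadraticAlgebra.norm : QuadraticAlgebra F d 0 →* F)).range.index = 2 := by
  set N : (QuadraticAlgebra F d 0)ˣ →* Fˣ := Units.map (QuadraticAlgebra.norm : QuadraticAlgebra F d 0 →* F) with hN
  set ι : Fˣ →* (QuadraticAlgebra F d 0)ˣ := Units.map (algebraMap F (QuadraticAlgebra F d 0) : F →* (QuadraticAlgebra F d 0)) with hι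
  set SF := (powMonoidHom 2 : Fˣ →* Fˣ).range with hSF
  set SK := (powMonoidHom 2 : (QuadraticAlgebra F d 0)ˣ →* (QuadraticAlgebra F d 0)ˣ).range with hSK
  have hNv : ∀ z : (QuadraticAlgebra F d 0)ˣ, ((N z : Fˣ) : F) = QuadraticAlgebra.norm (z : (QuadraticAlgebra F d 0)) := fun z => rfl
  have hιv : ∀ z : Fˣ, ((ι z : (QuadraticAlgebra F d 0)ˣ) : (QuadraticAlgebra F d 0)) = algebraMap F (QuadraticAlgebra F d 0) (z : F) := fun z => rfl
  have hns : ∀ r : F, r ^ 2 ≠ d := fun r h => hd.out r (by rw [h]; ring)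
  have hd0 : d ≠ 0 := fun h => hns 0 (by rw [h]; ring)
  have h1 : SF ≤ N.range := by
    rintro _ ⟨x, rfl⟩
    refine ⟨ι x, Units.ext ?_⟩
    rw [hNv, hιv, QuadraticAlgebra.norm_algebraMap]; rfl
  have h2 := Subgroup.relIndex_mul_index h1
  have h3 := Subgroup.index_comap SF N
  have hM : SF.comap N = SK ⊔ ι.range := by
    apply le_antisymm
    · intro a ha
      obtain ⟨f, hf⟩ := ha
      have hf' : (f : F) ^ 2 = QuadraticAlgebra.norm (a : (QuadraticAlgebra F d 0)) := by
        have := congrArg Units.val hf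
        exact this
      set c : (QuadraticAlgebra F d 0) := (a : (QuadraticAlgebra F d 0)) * algebraMap F (QuadraticAlgebra F d 0) ((f : F)⁻¹) with hc
      have hcn : QuadraticAlgebra.norm c = 1 := by
        rw [hc, map_mul, QuadraticAlgebra.norm_algebraMap, ← hf', ← mul_pow,
          mul_inv_cancel₀ f.ne_zero, one_pow]
      have hcs : c * star c = 1 := by
        rw [← QuadraticAlgebra.algebraMap_norm_eq_mul_star, hcn, map_one]
      have hb : ∃ b : (QuadraticAlgebra F d 0), b ≠ 0 ∧ b = c * star b := by
        by_cases h : 1 + c = 0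
        · refine ⟨ω, ?_, ?_⟩
          · intro h0
            have := congrArg QuadraticAlgebra.im h0
            simp at this
          · have : c = -1 := by linear_combination h
            rw [this]; ext <;> simp
        · refine ⟨1 + c, h, ?_⟩
          rw [star_add, star_one, mul_add, hcs, mul_one, add_comm]
      obtain ⟨b, hb0, hb⟩ := hb
      have hnb : QuadraticAlgebra.norm b ≠ 0 := by
        rwa [Ne, QuadraticAlgebra.norm_eq_zero_iff_eq_zero]
      have key : (a : (QuadraticAlgebra F d 0)) * algebraMap F (QuadraticAlgebra F d 0) (QuadraticAlgebra.norm b) = b ^ 2 * algebraMap F (QuadraticAlgebra F d 0) f := by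
        have e1 : c * algebraMap F (QuadraticAlgebra F d 0) f = a := by
          rw [hc, mul_assoc, ← map_mul, inv_mul_cancel₀ f.ne_zero, map_one, mul_one]
        rw [QuadraticAlgebra.algebraMap_norm_eq_mul_star, ← e1]
        linear_combination (-b * algebraMap F (QuadraticAlgebra F d 0) f) * hb
      have : a = (Units.mk0 b hb0) ^ 2 * ι (f * (Units.mk0 _ hnb)⁻¹) := by
        rw [map_mul, map_inv, ← mul_assoc, eq_mul_inv_iff_mul_eq]
        exact Units.ext key
      rw [this]
      exact Subgroup.mul_mem_sup ⟨_, rfl⟩ ⟨_, rfl⟩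
    · rw [sup_le_iff]
      constructor
      · rintro _ ⟨x, rfl⟩
        exact ⟨N x, by simp⟩
      · rintro _ ⟨x, rfl⟩
        refine ⟨x, Units.ext ?_⟩
        rw [hNv, hιv, QuadraticAlgebra.norm_algebraMap]; rfl
  have h4 := Subgroup.relIndex_mul_index (le_sup_left : SK ≤ SK ⊔ ι.range)
  rw [Subgroup.relIndex_sup_left, ← Subgroup.index_comap] at h4
  set T := SK.comap ι with hT
  have hTm : ∀ b : Fˣ, b ∈ T ↔ (∃ r : F, r ^ 2 = b) ∨ (∃ r : F, r ^ 2 = b * d) := by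
    intro b
    constructor
    · rintro ⟨z, hz⟩
      have hz' : (z : (QuadraticAlgebra F d 0)) ^ 2 = algebraMap F (QuadraticAlgebra F d 0) b := congrArg Units.val hz
      have e1 := congrArg QuadraticAlgebra.re hz'
      have e2 := congrArg QuadraticAlgebra.im hz'
      simp only [sq, QuadraticAlgebra.re_mul, QuadraticAlgebra.im_mul,
        QuadraticAlgebra.algebraMap_re, QuadraticAlgebra.algebraMap_im] at e1 e2
      have e3 : (z : (QuadraticAlgebra F d 0)).re * (z : (QuadraticAlgebra F d 0)).im = 0 := by
        have : (2 : F) * ((z : (QuadraticAlgebra F d 0)).re * (z : (QuadraticAlgebra F d 0)).im) = 0 := by linear_combination e2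
        simpa using this
      rcases mul_eq_zero.1 e3 with h | h
      · right
        exact ⟨d * (z : (QuadraticAlgebra F d 0)).im, by rw [h] at e1; linear_combination d * e1⟩
      · left
        exact ⟨(z : (QuadraticAlgebra F d 0)).re, by rw [h] at e1; linear_combination e1⟩
    · rintro (⟨r, hr⟩ | ⟨r, hr⟩)
      · have hr0 : r ≠ 0 := by
          rintro rfl
          exact b.ne_zero (by rw [← hr]; ring)
        refine ⟨ι (Units.mk0 r hr0), Units.ext ?_⟩
        change (algebraMap F (QuadraticAlgebra F d 0) r) ^ 2 = algebraMap F (QuadraticAlgebra F d 0) b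
        rw [← map_pow, hr]
      · have hr0 : r ≠ 0 := by
          rintro rfl
          exact mul_ne_zero b.ne_zero hd0 (by rw [← hr]; ring)
        have hz : (⟨0, r / d⟩ : (QuadraticAlgebra F d 0)) ^ 2 = algebraMap F (QuadraticAlgebra F d 0) b := by
          ext
          · simp only [sq, QuadraticAlgebra.re_mul, QuadraticAlgebra.algebraMap_re]
            field_simp
            linear_combination hr
          · simp [sq]
        have hz0 : (⟨0, r / d⟩ : (QuadraticAlgebra F d 0)) ≠ 0 := by
          intro h
          have := congrArg QuadraticAlgebra.im h
          simp [hr0, hd0] at this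
        exact ⟨Units.mk0 _ hz0, Units.ext hz⟩
  have hST : SF ≤ T := by
    rintro _ ⟨x, rfl⟩
    exact (hTm _).2 (Or.inl ⟨x, rfl⟩)
  have h5 := Subgroup.relIndex_mul_index hST
  have hSFm : ∀ b : Fˣ, b ∈ SF ↔ ∃ r : F, r ^ 2 = b := by
    intro b
    constructor
    · rintro ⟨x, hx⟩
      exact ⟨x, congrArg Units.val hx⟩
    · rintro ⟨r, hr⟩
      have hr0 : r ≠ 0 := by
        rintro rfl
        exact b.ne_zero (by rw [← hr]; ring)
      exact ⟨Units.mk0 r hr0, Units.ext hr⟩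
  have h6 : SF.relIndex T = 2 := by
    rw [Subgroup.relIndex, Subgroup.index_eq_two_iff]
    refine ⟨⟨Units.mk0 d hd0, (hTm _).2 (Or.inr ⟨d, by simp [sq]⟩)⟩, ?_⟩
    rintro ⟨b, hb⟩
    rw [Subgroup.mem_subgroupOf, Subgroup.mem_subgroupOf]
    simp only [Subgroup.coe_mul]
    rw [hSFm, hSFm]
    simp only [Units.val_mul, Units.val_mk0]
    rcases (hTm b).1 hb with h | h
    · right
      refine ⟨h, ?_⟩
      rintro ⟨s, hs⟩
      obtain ⟨r, hr⟩ := h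
      have hr0 : r ≠ 0 := by
        rintro rfl
        exact b.ne_zero (by rw [← hr]; ring)
      apply hns (s / r)
      rw [div_pow, hs, hr]
      field_simp
    · left
      refine ⟨h, ?_⟩
      rintro ⟨s, hs⟩
      obtain ⟨r, hr⟩ := h
      have hs0 : s ≠ 0 := by
        rintro rfl
        exact b.ne_zero (by rw [← hs]; ring)
      apply hns (r / s)
      rw [div_pow, hs, hr]
      field_simp
  rw [h6] at h5
  rw [hM] at h3
  rw [hK, h3] at h4
  rw [hF] at h2 h5
  have hT2 : T.index = 2 * k := by omega
  rw [hT2] at h4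
  have h7 : SF.relIndex N.range = 2 * k := by
    have : 0 < k := Nat.pos_of_ne_zero hk
    nlinarith
  rw [h7] at h2
  have : 0 < k := Nat.pos_of_ne_zero hk
  nlinarith

theorem norm_idx (p : ℕ) [Fact p.Prime] (F : Type) [Field F] [Algebra ℚ_[p] F]
    [FiniteDimensional ℚ_[p] F] (d : F) (hd : ∀ r : F, r ^ 2 ≠ d) :
    (∃ x : F, x ≠ 0 ∧ ∀ a b : F, x ≠ a ^ 2 - d * b ^ 2) ∧
    (∀ x y : F, x ≠ 0 → y ≠ 0 → (∀ a b : F, x ≠ a ^ 2 - d * b ^ 2) →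
      (∀ a b : F, y ≠ a ^ 2 - d * b ^ 2) → ∃ a b : F, x * y = a ^ 2 - d * b ^ 2) := by
  have : CharZero F := charZero_of_injective_algebraMap
    (algebraMap ℚ_[p] F).injective
  have : Fact (∀ r : F, r ^ 2 ≠ d + 0 * r) := ⟨fun r h => hd r (by rw [h]; ring)⟩
  have : FiniteDimensional ℚ_[p] (QuadraticAlgebra F d 0) :=
    Module.Finite.trans F _
  have hF := sq_index p F
  have hK := sq_index p (QuadraticAlgebra F d 0)
  rw [← Module.finrank_mul_finrank ℚ_[p] F (QuadraticAlgebra F d 0),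
    QuadraticAlgebra.finrank_eq_two, pow_mul] at hK
  have hidx := quad_idx F d _ (pow_ne_zero _ (card_quot_Zp p 2 two_ne_zero)) hF hK
  have hmem : ∀ u : Fˣ, u ∈ (Units.map (QuadraticAlgebra.norm : QuadraticAlgebra F d 0 →* F)).range
      ↔ ∃ a b : F, (u : F) = a ^ 2 - d * b ^ 2 := by
    intro u
    constructor
    · rintro ⟨z, hz⟩
      refine ⟨(z : QuadraticAlgebra F d 0).re, (z : QuadraticAlgebra F d 0).im, ?_⟩
      rw [← hz]
      change QuadraticAlgebra.norm _ = _
      rw [QuadraticAlgebra.norm_def]; ring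
    · rintro ⟨a, b, h⟩
      have hn : QuadraticAlgebra.norm (⟨a, b⟩ : QuadraticAlgebra F d 0) = u := by
        rw [QuadraticAlgebra.norm_def, h]; ring
      have h0 : (⟨a, b⟩ : QuadraticAlgebra F d 0) ≠ 0 := by
        intro h0
        rw [h0, QuadraticAlgebra.norm_zero] at hn
        exact u.ne_zero hn.symm
      exact ⟨Units.mk0 _ h0, Units.ext hn⟩
  constructor
  · obtain ⟨a, ha⟩ := Subgroup.index_eq_two_iff.1 hidx
    have h1 := ha 1
    rw [one_mul] at h1
    have : a ∉ (Units.map (QuadraticAlgebra.norm : QuadraticAlgebra F d 0 →* F)).range := by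
      intro h
      rcases h1 with h1 | h1
      · exact h1.2 (one_mem _)
      · exact h1.2 h
    rw [hmem] at this
    push Not at this
    exact ⟨a, a.ne_zero, this⟩
  · intro x y hx hy h1 h2
    have := (Subgroup.mul_mem_iff_of_index_two hidx (a := Units.mk0 x hx) (b := Units.mk0 y hy)).2
    rw [hmem, hmem, hmem] at this
    simp only [Units.val_mul, Units.val_mk0] at this
    apply this
    constructor
    · rintro ⟨a, b, h⟩; exact absurd h (h1 a b)
    · rintro ⟨a, b, h⟩; exact absurd h (h2 a b)
end quad

section hilb

def nmq {F : Type} [Field F] (d x : F) : Prop := ∃ a b : F, x = a ^ 2 - d * b ^ 2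

theorem nmq_mul {F : Type} [Field F] {d x y : F} (hx : nmq d x) (hy : nmq d y) : nmq d (x * y) := by
  obtain ⟨a, b, rfl⟩ := hx
  obtain ⟨u, v, rfl⟩ := hy
  exact ⟨a * u + d * b * v, a * v + b * u, by ring⟩

theorem nmq_div_sq {F : Type} [Field F] {d x : F} (y : F) (hy : y ≠ 0) (hx : nmq d (x * y ^ 2)) :
    nmq d x := by
  obtain ⟨a, b, h⟩ := hx
  refine ⟨a / y, b / y, ?_⟩
  field_simp
  exact h

theorem nmq_cancel {F : Type} [Field F] {d x y : F} (hy : y ≠ 0) (h : nmq d (x * y)) (h' : nmq d y) :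
    nmq d x :=
  nmq_div_sq y hy (by have := nmq_mul h h'; rwa [mul_assoc, ← sq] at this)

theorem nmq_symm {F : Type} [Field F] [CharZero F] {d x : F} (hx0 : x ≠ 0)
    (h : nmq d x) : nmq x d := by
  obtain ⟨a, b, h⟩ := h
  by_cases hb : b = 0
  · have ha : a ≠ 0 := by
      rintro rfl
      apply hx0; rw [h, hb]; ring
    refine ⟨(d + 1) / 2, (d - 1) / (2 * a), ?_⟩
    rw [h, hb]
    field_simp
    ring
  · refine ⟨a / b, 1 / b, ?_⟩
    rw [h]
    field_simp
    ring

theorem nmq_of_sq {F : Type} [Field F] [CharZero F] {d r : F} (hr : r ≠ 0) (h : r ^ 2 = d) (x : F) :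
    nmq d x := by
  refine ⟨(x + 1) / 2, (x - 1) / (2 * r), ?_⟩
  rw [← h]
  field_simp
  ring

theorem hilb_sep (p : ℕ) [Fact p.Prime] (F : Type) [Field F] [Algebra ℚ_[p] F]
    [FiniteDimensional ℚ_[p] F] (e d : F) (he : ∀ r : F, r ^ 2 ≠ e) (hd : ∀ r : F, r ^ 2 ≠ d)
    (hed : ∀ r : F, r ^ 2 ≠ e * d) : ∃ x : F, x ≠ 0 ∧ nmq e x ∧ ¬ nmq d x := by
  have : CharZero F := charZero_of_injective_algebraMap (algebraMap ℚ_[p] F).injective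
  have he0 : e ≠ 0 := fun h => he 0 (by rw [h]; ring)
  have hd0 : d ≠ 0 := fun h => hd 0 (by rw [h]; ring)
  have idx : ∀ d : F, (∀ r : F, r ^ 2 ≠ d) → (∃ x : F, x ≠ 0 ∧ ¬ nmq d x) ∧
      ∀ x y : F, x ≠ 0 → y ≠ 0 → ¬ nmq d x → ¬ nmq d y → nmq d (x * y) := by
    intro d hd
    have := norm_idx p F d hd
    simpa [nmq] using this
  by_contra hcon
  have hsub : ∀ x : F, x ≠ 0 → nmq e x → nmq d x := by
    intro x hx h
    by_contra h'
    exact hcon ⟨x, hx, h, h'⟩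
  obtain ⟨x1, hx1, hnx1⟩ := (idx d hd).1
  have hsub' : ∀ x : F, x ≠ 0 → nmq d x → nmq e x := by
    intro x hx h
    by_contra h'
    have h1 : ¬ nmq e x1 := fun h => hnx1 (hsub _ hx1 h)
    have h2 := hsub _ (mul_ne_zero hx1 hx) ((idx e he).2 _ _ hx1 hx h1 h')
    exact hnx1 (nmq_cancel hx h2 h)
  obtain ⟨x, hx, hnx⟩ := (idx (e * d) hed).1
  apply hnx
  apply nmq_symm (mul_ne_zero he0 hd0)
  by_cases hxe : nmq e x
  · exact nmq_mul (nmq_symm hx hxe) (nmq_symm hx (hsub x hx hxe))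
  · have hxd : ¬ nmq d x := fun h => hxe (hsub' x hx h)
    have hxs : ∀ r : F, r ^ 2 ≠ x := by
      intro r hr
      exact hxe ⟨r, 0, by rw [← hr]; ring⟩
    exact (idx x hxs).2 e d he0 hd0 (fun h => hxe (nmq_symm he0 h)) (fun h => hxd (nmq_symm hd0 h))

end hilb

theorem char0 (p : ℕ) [Fact p.Prime] (K : Type) [Field K] [Algebra ℚ_[p] K] : CharZero K :=
  charZero_of_injective_algebraMap (algebraMap ℚ_[p] K).injective

section tower
set_option linter.unusedSectionVars false
variable (p : ℕ) [Fact p.Prime] (K : Type) [Field K] [Algebra ℚ_[p] K] [FiniteDimensional ℚ_[p] K]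

def fixI (σ τ : K ≃ₐ[ℚ_[p]] K) : IntermediateField ℚ_[p] K where
  carrier := {x | σ x = x ∧ τ x = x}
  mul_mem' := by
    rintro a b ⟨h1, h2⟩ ⟨h3, h4⟩
    exact ⟨by rw [map_mul, h1, h3], by rw [map_mul, h2, h4]⟩
  add_mem' := by
    rintro a b ⟨h1, h2⟩ ⟨h3, h4⟩
    exact ⟨by rw [map_add, h1, h3], by rw [map_add, h2, h4]⟩
  algebraMap_mem' := fun r => ⟨σ.commutes r, τ.commutes r⟩
  inv_mem' := by
    rintro a ⟨h1, h2⟩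
    exact ⟨by rw [map_inv₀, h1], by rw [map_inv₀, h2]⟩

theorem mem_fixI (σ τ : K ≃ₐ[ℚ_[p]] K) (x : K) : x ∈ fixI p K σ τ ↔ σ x = x ∧ τ x = x := Iff.rfl


variable {K}
variable {σ τ : K ≃ₐ[ℚ_[p]] K}

/-- norms `w τ w` with `w` fixed by σ, in terms of `a² - δ² b²`. -/
theorem nm_iff (hτ2 : ∀ x, τ (τ x) = x) (hc : ∀ x, σ (τ x) = τ (σ x))
    (δ : K) (hδ0 : δ ≠ 0) (hσδ : σ δ = δ) (hτδ : τ δ = -δ) (x : K) :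
    (∃ w, σ w = w ∧ x = w * τ w) ↔
      ∃ a b : fixI p K σ τ, x = (a : K) ^ 2 - δ ^ 2 * (b : K) ^ 2 := by
  have := char0 p K
  have hs2 : σ 2 = 2 := map_ofNat σ 2
  have ht2 : τ 2 = 2 := map_ofNat τ 2
  constructor
  · rintro ⟨w, hw, rfl⟩
    refine ⟨⟨(w + τ w) / 2, ?_, ?_⟩, ⟨(w - τ w) / (2 * δ), ?_, ?_⟩, ?_⟩
    · simp [hc, hw, hs2]
    · simp [hτ2, ht2]; ring
    · simp [hc, hw, hσδ, hs2]
    · simp [hτ2, hτδ, ht2]; field_simp; ring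
    · field_simp; ring
  · rintro ⟨⟨a, ha⟩, ⟨b, hb⟩, rfl⟩
    rw [mem_fixI] at ha hb
    exact ⟨a + δ * b, by simp [ha.1, hb.1, hσδ], by simp [ha.2, hb.2, hτδ]; ring⟩

theorem nonsq (δ : K) (hδ0 : δ ≠ 0) (hd : σ δ = -δ ∨ τ δ = -δ) (d : fixI p K σ τ)
    (hdd : (d : K) = δ ^ 2) : ∀ r : fixI p K σ τ, r ^ 2 ≠ d := by
  have := char0 p K
  rintro ⟨r, hr⟩ h
  rw [mem_fixI] at hr
  have h1 : r ^ 2 = δ ^ 2 := by rw [← hdd, ← h]; rfl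
  have hne : δ ≠ -δ := by
    intro h
    have : (2 : K) * δ = 0 := by linear_combination h
    exact hδ0 (by simpa using this)
  rcases sq_eq_sq_iff_eq_or_eq_neg.1 h1 with h2 | h2
  · subst h2
    rcases hd with h | h
    · exact hne (by rw [← h, hr.1])
    · exact hne (by rw [← h, hr.2])
  · subst h2
    rw [map_neg, map_neg] at hr
    rcases hd with h | h
    · apply hne; rw [← h]; exact (neg_injective hr.1).symm
    · apply hne; rw [← h]; exact (neg_injective hr.2).symm

theorem nm_idx (hτ2 : ∀ x, τ (τ x) = x) (hc : ∀ x, σ (τ x) = τ (σ x))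
    (δ : K) (hδ0 : δ ≠ 0) (hσδ : σ δ = δ) (hτδ : τ δ = -δ) :
    (∃ c : K, c ≠ 0 ∧ σ c = c ∧ τ c = c ∧ ¬ ∃ w, σ w = w ∧ c = w * τ w) ∧
    ∀ c c' : K, c ≠ 0 → c' ≠ 0 → σ c = c → τ c = c → σ c' = c' → τ c' = c' →
      (¬ ∃ w, σ w = w ∧ c = w * τ w) → (¬ ∃ w, σ w = w ∧ c' = w * τ w) →
      ∃ w, σ w = w ∧ c * c' = w * τ w := by
  set d : fixI p K σ τ := ⟨δ ^ 2, by rw [mem_fixI]; simp [hσδ, hτδ]⟩ with hd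
  obtain ⟨h1, h2⟩ := norm_idx p (fixI p K σ τ) d (nonsq p δ hδ0 (Or.inr hτδ) d rfl)
  simp only [nm_iff p hτ2 hc δ hδ0 hσδ hτδ]
  constructor
  · obtain ⟨x, hx0, hx⟩ := h1
    refine ⟨x, by simpa using hx0, x.2.1, x.2.2, ?_⟩
    rintro ⟨a, b, h⟩
    exact hx a b (Subtype.ext h)
  · intro c c' hc0 hc0' e1 e2 e3 e4 hn hn'
    obtain ⟨a, b, h⟩ := h2 ⟨c, e1, e2⟩ ⟨c', e3, e4⟩ (fun h => hc0 (congrArg Subtype.val h))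
      (fun h => hc0' (congrArg Subtype.val h)) (fun a b h => hn ⟨a, b, congrArg Subtype.val h⟩)
      (fun a b h => hn' ⟨a, b, congrArg Subtype.val h⟩)
    exact ⟨a, b, congrArg Subtype.val h⟩

theorem nm_sep (hσ2 : ∀ x, σ (σ x) = x) (hτ2 : ∀ x, τ (τ x) = x) (hc : ∀ x, σ (τ x) = τ (σ x))
    (δ η : K) (hδ0 : δ ≠ 0) (hσδ : σ δ = δ) (hτδ : τ δ = -δ)
    (hη0 : η ≠ 0) (hση : σ η = -η) (hτη : τ η = η) :
    ∃ c0 : K, c0 ≠ 0 ∧ τ c0 = c0 ∧ ¬ ∃ w, σ w = w ∧ c0 * σ c0 = w * τ w := by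
  set d : fixI p K σ τ := ⟨δ ^ 2, by rw [mem_fixI]; simp [hσδ, hτδ]⟩ with hd
  set e : fixI p K σ τ := ⟨η ^ 2, by rw [mem_fixI]; simp [hση, hτη]⟩ with he
  obtain ⟨x, hx0, ⟨a, b, hab⟩, hx⟩ := hilb_sep p (fixI p K σ τ) e d
    (nonsq p η hη0 (Or.inl hση) e rfl) (nonsq p δ hδ0 (Or.inr hτδ) d rfl)
    (nonsq p (η * δ) (mul_ne_zero hη0 hδ0) (Or.inl (by simp [hση, hσδ])) (e * d)
      (by simp [hd, he, mul_pow]))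
  have hxK : (x : K) = (a : K) ^ 2 - η ^ 2 * (b : K) ^ 2 := congrArg Subtype.val hab
  have ha := a.2
  have hb := b.2
  rw [mem_fixI] at ha hb
  have hN : ((a : K) + η * b) * σ ((a : K) + η * b) = x := by
    rw [hxK]; simp [ha.1, hb.1, hση]; ring
  refine ⟨(a : K) + η * b, ?_, by simp [ha.2, hb.2, hτη], ?_⟩
  · intro h
    rw [h] at hN
    exact hx0 (Subtype.ext (by rw [← hN]; simp))
  · rw [hN, nm_iff p hτ2 hc δ hδ0 hσδ hτδ]
    rintro ⟨a', b', h⟩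
    exact hx ⟨a', b', Subtype.ext h⟩

theorem nm_top (hσ2 : ∀ x, σ (σ x) = x) (hτ2 : ∀ x, τ (τ x) = x) (hc : ∀ x, σ (τ x) = τ (σ x))
    (δ η : K) (hδ0 : δ ≠ 0) (hσδ : σ δ = δ) (hτδ : τ δ = -δ)
    (hη0 : η ≠ 0) (hση : σ η = -η) (hτη : τ η = η)
    (c : K) (hc0 : c ≠ 0) (hσc : σ c = c) (hτc : τ c = c) : ∃ w, c = w * τ w := by
  obtain ⟨c0, hc00, hτc0, hn⟩ := nm_sep p hσ2 hτ2 hc δ η hδ0 hσδ hτδ hη0 hση hτη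
  by_contra hcon
  have h := (nm_idx (σ := 1) p hτ2 (fun x => rfl) δ hδ0 rfl hτδ).2 c c0 hc0 hc00 rfl hτc rfl hτc0
    (by rintro ⟨w, -, h⟩; exact hcon ⟨w, h⟩)
    (by
      rintro ⟨w, -, h⟩
      exact hn ⟨w * σ w, by simp [hσ2, mul_comm], by rw [h]; simp [hc]; ring⟩)
  obtain ⟨w, -, h⟩ := h
  apply hn
  refine ⟨w * σ w / c, by simp [hσ2, hσc, mul_comm], ?_⟩
  have h2 := congrArg σ h
  simp only [map_mul, hσc, hc] at h2
  simp only [map_div₀, map_mul, hτc, ← hc]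
  field_simp
  rw [hc]
  linear_combination h * (c * σ c0) + (w * τ w) * h2

theorem univ2 (hτ2 : ∀ x, τ (τ x) = x) (hc : ∀ x, σ (τ x) = τ (σ x))
    (δ : K) (hδ0 : δ ≠ 0) (hσδ : σ δ = δ) (hτδ : τ δ = -δ)
    (a b : K) (ha0 : a ≠ 0) (hb0 : b ≠ 0) (hσa : σ a = a) (hτa : τ a = a) (hσb : σ b = b)
    (hτb : τ b = b) : ∃ x y, σ x = x ∧ σ y = y ∧ a * (x * τ x) + b * (y * τ y) = 1 := by
  have := char0 p K
  by_cases ha : ∃ w, σ w = w ∧ a = w * τ w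
  · obtain ⟨w, hw, h⟩ := ha
    have : w ≠ 0 := by rintro rfl; simp at h; exact ha0 h
    have : τ w ≠ 0 := by simpa using this
    exact ⟨w⁻¹, 0, by simp [hw], by simp, by rw [h]; simp; field_simp⟩
  by_cases hb : ∃ w, σ w = w ∧ b = w * τ w
  · obtain ⟨w, hw, h⟩ := hb
    have : w ≠ 0 := by rintro rfl; simp at h; exact hb0 h
    have : τ w ≠ 0 := by simpa using this
    exact ⟨0, w⁻¹, by simp, by simp [hw], by rw [h]; simp; field_simp⟩
  have idx := (nm_idx p hτ2 hc δ hδ0 hσδ hτδ).2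
  obtain ⟨w, hw, hab⟩ := idx a b ha0 hb0 hσa hτa hσb hτb ha hb
  suffices H : ∃ x y, σ x = x ∧ σ y = y ∧ a * (x * τ x + y * τ y) = 1 by
    obtain ⟨x, y, hx, hy, h⟩ := H
    have hw0 : w ≠ 0 := by rintro rfl; simp [ha0, hb0] at hab
    have : τ w ≠ 0 := by simpa using hw0
    refine ⟨x, a * y / w, hx, by simp [hσa, hw, hy], ?_⟩
    simp only [map_div₀, map_mul, hτa]
    field_simp
    linear_combination (w * τ w) * h + (a * y * τ y) * hab
  by_contra hcon
  have hsum : ∀ x y, σ x = x → σ y = y → ∃ w, σ w = w ∧ x * τ x + y * τ y = w * τ w := by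
    intro x y hx hy
    by_contra hs
    have hs0 : x * τ x + y * τ y ≠ 0 := by
      intro h
      exact hs ⟨0, by simp, by simp [h]⟩
    obtain ⟨v, hv, h⟩ := idx a _ ha0 hs0 hσa hτa (by simp [hc, hx, hy])
      (by simp [hτ2]; ring) ha hs
    have hv0 : v ≠ 0 := by rintro rfl; simp [ha0, hs0] at h
    have : τ v ≠ 0 := by simpa using hv0
    refine hcon ⟨x / v, y / v, by simp [hx, hv], by simp [hy, hv], ?_⟩
    simp only [map_div₀]
    field_simp
    linear_combination h
  have hnat : ∀ n : ℕ, ∃ w, σ w = w ∧ (n : K) = w * τ w := by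
    intro n
    induction n with
    | zero => exact ⟨0, by simp, by simp⟩
    | succ n ih =>
      obtain ⟨w, hw, h⟩ := ih
      obtain ⟨v, hv, h'⟩ := hsum w 1 hw (by simp)
      exact ⟨v, hv, by rw [← h', ← h]; simp⟩
  obtain ⟨w, hw, h⟩ := hnat (4 * p - 1)
  have hp : 1 ≤ 4 * p := by have := (Fact.out : p.Prime).pos; omega
  rw [Nat.cast_sub hp] at h
  push_cast at h
  obtain ⟨⟨s, hs1⟩, hs⟩ := sq_exists p (fixI p K σ τ)
  rw [mem_fixI] at hs1
  have hsK : s ^ 2 = 1 - 4 * (p : K) := by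
    exact congrArg Subtype.val hs
  have hs0 : s ≠ 0 := by
    rintro rfl
    have h4 : ((4 * p : ℕ) : K) = (1 : ℕ) := by push_cast; linear_combination hsK
    have := Nat.cast_injective h4
    omega
  have hs2 : σ 2 = 2 := map_ofNat σ 2
  apply hcon
  refine ⟨(a⁻¹ + 1) / 2, w / s * ((a⁻¹ - 1) / 2), by simp [hσa, hs2], by simp [hσa, hw, hs1.1, hs2], ?_⟩
  simp only [map_div₀, map_mul, map_add, map_sub, map_inv₀, hτa, map_one, hs1.2, map_ofNat]
  field_simp
  linear_combination (-(1 - a) ^ 2) * h + (1 - a) ^ 2 * hsK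
end tower

section herm
variable {K : Type} [Field K] [StarRing K]

def hcls (K : Type) [Field K] [StarRing K] (ι : Type) [Fintype ι] [DecidableEq ι] : Prop :=
  ∀ (h h' : Matrix ι ι K) (z : K), hᴴ = h → h'ᴴ = h' → h.det ≠ 0 → z ≠ 0 →
    h'.det = h.det * (z * star z) → ∃ P : Matrix ι ι K, P.det ≠ 0 ∧ Pᴴ * h * P = h'

theorem exists_col {ι : Type} [Fintype ι] [DecidableEq ι] (v : ι → K) (hv : v ≠ 0) (k : ι) :
    ∃ P : Matrix ι ι K, P.det ≠ 0 ∧ ∀ i, P i k = v i := by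
  obtain ⟨i0, hi0⟩ := Function.ne_iff.1 hv
  refine ⟨((1 : Matrix ι ι K).updateCol i0 v).submatrix id (Equiv.swap i0 k), ?_, ?_⟩
  · rw [Matrix.det_permute', ← Matrix.cramer_apply, Matrix.cramer_one]
    refine mul_ne_zero ?_ hi0
    rcases Int.units_eq_one_or (Equiv.Perm.sign (Equiv.swap i0 k)) with h | h <;> rw [h] <;> simp
  · intro i
    simp

theorem conj_entry {ι : Type} [Fintype ι] (h P : Matrix ι ι K) (v : ι → K) (k : ι)
    (hP : ∀ i, P i k = v i) : (Pᴴ * h * P) k k = star v ⬝ᵥ h *ᵥ v := by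
  rw [Matrix.mul_assoc, Matrix.mul_apply]
  simp only [dotProduct, Matrix.conjTranspose_apply, hP, Pi.star_apply, Matrix.mul_apply,
    Matrix.mulVec]

theorem split_off {κ : Type} [Fintype κ] [DecidableEq κ] (h : Matrix (Unit ⊕ κ) (Unit ⊕ κ) K)
    (hh : hᴴ = h) (v : Unit ⊕ κ → K) (a : K) (ha : star v ⬝ᵥ h *ᵥ v = a) (ha0 : a ≠ 0) :
    star a = a ∧ ∃ (P : Matrix (Unit ⊕ κ) (Unit ⊕ κ) K) (C : Matrix κ κ K), P.det ≠ 0 ∧ Cᴴ = C ∧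
      Pᴴ * h * P = fromBlocks (a • 1) 0 0 C := by
  have hv : v ≠ 0 := by
    rintro rfl
    simp at ha
    exact ha0 ha.symm
  obtain ⟨P, hP, hPv⟩ := exists_col v hv (Sum.inl ())
  set g := Pᴴ * h * P with hg
  have hgh : gᴴ = g := by
    rw [hg]; simp only [Matrix.conjTranspose_mul, Matrix.conjTranspose_conjTranspose, hh,
      Matrix.mul_assoc]
  have hga : g (Sum.inl ()) (Sum.inl ()) = a := by rw [hg, conj_entry h P v _ hPv, ha]
  have hsa : star a = a := by
    have := congrFun (congrFun hgh (Sum.inl ())) (Sum.inl ())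
    rwa [Matrix.conjTranspose_apply, hga] at this
  refine ⟨hsa, ?_⟩
  have hA : g.toBlocks₁₁ = a • (1 : Matrix Unit Unit K) := by
    ext i j
    simp [Matrix.toBlocks₁₁, hga]
  set B := g.toBlocks₁₂ with hB
  set D := g.toBlocks₂₂ with hD
  have hC : g.toBlocks₂₁ = Bᴴ := by
    rw [hB]
    ext i j
    simp only [Matrix.toBlocks₂₁, Matrix.toBlocks₁₂, Matrix.of_apply, Matrix.conjTranspose_apply]
    exact (congrFun (congrFun hgh (Sum.inr i)) (Sum.inl j)).symm
  have hDh : Dᴴ = D := by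
    rw [hD]
    ext i j
    simp only [Matrix.toBlocks₂₂, Matrix.of_apply, Matrix.conjTranspose_apply]
    exact (congrFun (congrFun hgh (Sum.inr i)) (Sum.inr j))
  have hgb : g = fromBlocks (a • 1) B Bᴴ D := by
    rw [← Matrix.fromBlocks_toBlocks g, hA, hC]
  refine ⟨P * fromBlocks 1 (-(a⁻¹ • B)) 0 1, D - a⁻¹ • (Bᴴ * B), ?_, ?_, ?_⟩
  · rw [Matrix.det_mul, Matrix.det_fromBlocks_zero₂₁]
    simpa using hP
  · simp [hDh, hsa]
  · have : (P * fromBlocks 1 (-(a⁻¹ • B)) 0 1)ᴴ * h * (P * fromBlocks 1 (-(a⁻¹ • B)) 0 1)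
        = (fromBlocks 1 (-(a⁻¹ • B)) 0 1)ᴴ * g * fromBlocks 1 (-(a⁻¹ • B)) 0 1 := by
      rw [hg]; simp only [Matrix.conjTranspose_mul, Matrix.mul_assoc]
    rw [this, hgb, Matrix.fromBlocks_conjTranspose, Matrix.fromBlocks_multiply,
      Matrix.fromBlocks_multiply]
    congr 1
    · simp
    · simp [ha0]
    · simp [ha0, hsa]
    · simp [ha0, hsa]; abel

theorem exists_q {ι : Type} [Fintype ι] [DecidableEq ι] [CharZero K] [Nonempty ι]
    (h : Matrix ι ι K) (hh : hᴴ = h)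
    (hd : h.det ≠ 0) : ∃ v, star v ⬝ᵥ h *ᵥ v ≠ 0 := by
  by_cases H : ∃ i, h i i ≠ 0
  · obtain ⟨i, hi⟩ := H
    refine ⟨Pi.single i 1, ?_⟩
    rw [← Pi.single_star]
    simpa using hi
  · push Not at H
    have h0 : h ≠ 0 := by
      rintro rfl
      exact hd Matrix.det_zero
    obtain ⟨i, k, hik⟩ : ∃ i k, h i k ≠ 0 := by
      by_contra hcon
      push Not at hcon
      exact h0 (Matrix.ext hcon)
    have hki : h k i = star (h i k) := by
      conv_lhs => rw [← hh]
      rfl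
    refine ⟨Pi.single i 1 + Pi.single k (h i k)⁻¹, ?_⟩
    rw [star_add, ← Pi.single_star, ← Pi.single_star, Matrix.mulVec_add, dotProduct_add,
      add_dotProduct, add_dotProduct]
    have hsk : star (h i k) ≠ 0 := by simpa using hik
    simp [H, hki, hik]

theorem one_off {κ : Type} [Fintype κ] [DecidableEq κ] [CharZero K] [Nonempty κ]
    (hU : ∀ a b : K, a ≠ 0 → b ≠ 0 → star a = a → star b = b →
      ∃ x y : K, a * (x * star x) + b * (y * star y) = 1)
    (h : Matrix (Unit ⊕ κ) (Unit ⊕ κ) K) (hh : hᴴ = h) (hd : h.det ≠ 0) :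
    ∃ (P : Matrix (Unit ⊕ κ) (Unit ⊕ κ) K) (C : Matrix κ κ K), P.det ≠ 0 ∧ Cᴴ = C ∧
      Pᴴ * h * P = fromBlocks 1 0 0 C := by
  obtain ⟨v, hv⟩ := exists_q h hh hd
  obtain ⟨hsa, P, C, hP, hC, e⟩ := split_off h hh v _ rfl hv
  set a := star v ⬝ᵥ h *ᵥ v with ha
  have hdC : C.det ≠ 0 := by
    intro h0
    have := congrArg Matrix.det e
    rw [Matrix.det_fromBlocks_zero₂₁, h0, mul_zero, Matrix.det_mul, Matrix.det_mul,
      Matrix.det_conjTranspose] at this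
    simp [hP, hd] at this
  obtain ⟨w, hw⟩ := exists_q C hC hdC
  set b := star w ⬝ᵥ C *ᵥ w with hb
  have hsb : star b = b := by
    rw [hb, ← Matrix.star_dotProduct_star, star_star, Matrix.star_mulVec, hC, ← Matrix.dotProduct_mulVec]
  obtain ⟨x, y, hxy⟩ := hU a b hv hw hsa hsb
  set g := fromBlocks (a • (1 : Matrix Unit Unit K)) 0 0 C with hg
  have hgh : gᴴ = g := by
    rw [hg, Matrix.fromBlocks_conjTranspose]; simp [hC, hsa]
  have hq : star (Sum.elim (fun _ : Unit => x) (y • w)) ⬝ᵥ g *ᵥ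
      (Sum.elim (fun _ : Unit => x) (y • w)) = 1 := by
    have es : star (Sum.elim (fun _ : Unit => x) (y • w)) =
        Sum.elim (fun _ : Unit => star x) (star y • star w) := by
      ext i
      rcases i with i | i
      · rfl
      · simp
    rw [hg, es, Matrix.fromBlocks_mulVec, sumElim_dotProduct_sumElim, ← hxy, hb]
    simp only [Sum.elim_comp_inl, Sum.elim_comp_inr, Matrix.zero_mulVec, smul_zero, add_zero, zero_add,
      Matrix.mulVec_smul, dotProduct_smul, smul_dotProduct, smul_eq_mul, Matrix.smul_mulVec,
      Matrix.one_mulVec]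
    simp only [dotProduct, Finset.univ_unique, Finset.sum_singleton, Pi.smul_apply, smul_eq_mul]
    ring
  obtain ⟨-, Q, C', hQ, hC', e'⟩ := split_off g hgh _ 1 hq one_ne_zero
  refine ⟨P * Q, C', by rw [Matrix.det_mul]; exact mul_ne_zero hP hQ, hC', ?_⟩
  rw [one_smul] at e'
  rw [← e', ← e, Matrix.conjTranspose_mul]
  simp only [Matrix.mul_assoc]

theorem hcls_step {κ : Type} [Fintype κ] [DecidableEq κ] [CharZero K] [Nonempty κ]
    (hU : ∀ a b : K, a ≠ 0 → b ≠ 0 → star a = a → star b = b →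
      ∃ x y : K, a * (x * star x) + b * (y * star y) = 1)
    (IH : hcls K κ) : hcls K (Unit ⊕ κ) := by
  intro h h' z hh hh' hd hz hdet
  have hsz : star z ≠ 0 := by simpa using hz
  have hd' : h'.det ≠ 0 := by
    rw [hdet]; exact mul_ne_zero hd (mul_ne_zero hz hsz)
  obtain ⟨P1, C1, hP1, hC1, e1⟩ := one_off hU h hh hd
  obtain ⟨P2, C2, hP2, hC2, e2⟩ := one_off hU h' hh' hd'
  have d1 := congrArg Matrix.det e1
  have d2 := congrArg Matrix.det e2
  rw [Matrix.det_fromBlocks_zero₂₁, Matrix.det_mul, Matrix.det_mul, Matrix.det_conjTranspose,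
    Matrix.det_one, one_mul] at d1 d2
  have hs1 : star P1.det ≠ 0 := by simpa using hP1
  have hs2 : star P2.det ≠ 0 := by simpa using hP2
  obtain ⟨Q, hQ, e3⟩ := IH C1 C2 (z * P2.det / P1.det) hC1 hC2
    (by rw [← d1]; exact mul_ne_zero (mul_ne_zero hs1 hd) hP1)
    (div_ne_zero (mul_ne_zero hz hP2) hP1)
    (by
      rw [← d1, ← d2, hdet, star_div₀, star_mul]
      field_simp)
  have hu : IsUnit P2.det := isUnit_iff_ne_zero.2 hP2
  refine ⟨P1 * fromBlocks 1 0 0 Q * P2⁻¹, ?_, ?_⟩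
  · rw [Matrix.det_mul, Matrix.det_mul, Matrix.det_fromBlocks_zero₂₁, Matrix.det_nonsing_inv]
    simp [hP1, hQ, hP2]
  · have e4 : (fromBlocks (1 : Matrix Unit Unit K) 0 0 Q)ᴴ * (P1ᴴ * h * P1) * fromBlocks 1 0 0 Q =
        P2ᴴ * h' * P2 := by
      rw [e1, e2, ← e3, Matrix.fromBlocks_conjTranspose, Matrix.fromBlocks_multiply,
        Matrix.fromBlocks_multiply]
      simp
    have hu' : IsUnit (P2ᴴ).det := by
      rw [Matrix.det_conjTranspose]; exact isUnit_iff_ne_zero.2 hs2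
    calc (P1 * fromBlocks 1 0 0 Q * P2⁻¹)ᴴ * h * (P1 * fromBlocks 1 0 0 Q * P2⁻¹)
        = (P2ᴴ)⁻¹ * ((fromBlocks (1 : Matrix Unit Unit K) 0 0 Q)ᴴ * (P1ᴴ * h * P1) *
            fromBlocks 1 0 0 Q) * P2⁻¹ := by
          simp only [Matrix.conjTranspose_mul, Matrix.conjTranspose_nonsing_inv, Matrix.mul_assoc]
      _ = (P2ᴴ)⁻¹ * (P2ᴴ * h' * P2) * P2⁻¹ := by rw [e4]
      _ = ((P2ᴴ)⁻¹ * P2ᴴ) * h' * (P2 * P2⁻¹) := by simp only [Matrix.mul_assoc]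
      _ = h' := by
          rw [Matrix.nonsing_inv_mul _ hu', Matrix.mul_nonsing_inv _ hu, Matrix.one_mul,
            Matrix.mul_one]

theorem hcls_equiv {ι κ : Type} [Fintype κ] [DecidableEq κ] [Fintype ι] [DecidableEq ι]
    (e : ι ≃ κ) (IH : hcls K κ) : hcls K ι := by
  intro h h' z hh hh' hd hz hdet
  obtain ⟨P, hP, e1⟩ := IH (h.submatrix e.symm e.symm) (h'.submatrix e.symm e.symm) z
    (by rw [Matrix.conjTranspose_submatrix, hh]) (by rw [Matrix.conjTranspose_submatrix, hh'])
    (by rwa [Matrix.det_submatrix_equiv_self]) hz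
    (by rwa [Matrix.det_submatrix_equiv_self, Matrix.det_submatrix_equiv_self])
  refine ⟨P.submatrix e e, by rwa [Matrix.det_submatrix_equiv_self], ?_⟩
  have := congrArg (fun M : Matrix κ κ K => M.submatrix e e) e1
  simp only [← Matrix.submatrix_mul_equiv _ _ _ e _, Matrix.submatrix_submatrix,
    Equiv.symm_comp_self, Matrix.submatrix_id_id] at this
  rw [← this, Matrix.conjTranspose_submatrix]

theorem hcls_fin [CharZero K]
    (hU : ∀ a b : K, a ≠ 0 → b ≠ 0 → star a = a → star b = b →
      ∃ x y : K, a * (x * star x) + b * (y * star y) = 1) (n : ℕ) : hcls K (Fin n) := by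
  induction n with
  | zero =>
    intro h h' z _ _ _ _ _
    exact ⟨1, by simp, Subsingleton.elim _ _⟩
  | succ n ih =>
    rcases n with _ | n
    · intro h h' z _ _ _ hz hdet
      refine ⟨z • 1, by simpa using hz, ?_⟩
      ext i j
      fin_cases i; fin_cases j
      simp [Matrix.det_fin_one] at hdet ⊢
      rw [hdet]; ring
    · have : hcls K (Unit ⊕ Fin (n + 1)) := hcls_step hU ih
      refine hcls_equiv (Fintype.equivOfCardEq ?_) this
      simp [add_comm]
end herm

section mat
set_option linter.unusedSectionVars false
variable {p : ℕ} [Fact p.Prime] {K : Type} [Field K] [Algebra ℚ_[p] K] [FiniteDimensional ℚ_[p] K]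
variable {n : ℕ}

theorem mapmul (τ : K ≃ₐ[ℚ_[p]] K) (M N : Matrix (Fin n) (Fin n) K) :
    (M * N).map τ = M.map τ * N.map τ := by
  ext i j
  simp [Matrix.mul_apply]

theorem trmul (τ : K ≃ₐ[ℚ_[p]] K) (M N : Matrix (Fin n) (Fin n) K) :
    ((M * N).map τ)ᵀ = (N.map τ)ᵀ * (M.map τ)ᵀ := by
  rw [mapmul, Matrix.transpose_mul]

theorem detmap (τ : K ≃ₐ[ℚ_[p]] K) (M : Matrix (Fin n) (Fin n) K) :
    (M.map τ).det = τ M.det := by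
  have := AlgEquiv.map_det τ M
  rw [this]; rfl

theorem mapone (τ : K ≃ₐ[ℚ_[p]] K) : (1 : Matrix (Fin n) (Fin n) K).map τ = 1 := by
  ext i j
  by_cases h : i = j <;> simp [Matrix.one_apply, h]

theorem mat90 (σ : K ≃ₐ[ℚ_[p]] K) (η : K) (hη0 : η ≠ 0) (hση : σ η = -η)
    (x : Matrix (Fin n) (Fin n) K) (hx : x * x.map σ = 1) :
    ∃ z : Matrix (Fin n) (Fin n) K, z.det ≠ 0 ∧ z = x * z.map σ := by
  have := char0 p K
  set M : Matrix (Fin n) (Fin n) (Polynomial K) :=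
    Matrix.of fun i j => Polynomial.X * Polynomial.C ((1 + x) i j) + Polynomial.C (η * (1 - x) i j)
    with hM
  have hev : ∀ t : K, M.det.eval t = (t • (1 + x) + η • (1 - x)).det := by
    intro t
    have := RingHom.map_det (Polynomial.evalRingHom t) M
    rw [Polynomial.coe_evalRingHom] at this
    rw [this]
    congr 1
    ext i j
    simp [hM]
    ring
  have hne : M.det ≠ 0 := by
    intro h0
    have h1 := hev η
    rw [h0, Polynomial.eval_zero, ← smul_add, Matrix.det_smul] at h1
    have h2 : (1 + x + (1 - x)) = (2 : K) • (1 : Matrix (Fin n) (Fin n) K) := by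
      rw [two_smul]; abel
    rw [h2, Matrix.det_smul, Matrix.det_one] at h1
    have : η ^ Fintype.card (Fin n) * (2 ^ Fintype.card (Fin n) * 1) ≠ 0 :=
      mul_ne_zero (pow_ne_zero _ hη0) (mul_ne_zero (pow_ne_zero _ two_ne_zero) one_ne_zero)
    exact this h1.symm
  obtain ⟨t, ht⟩ : ∃ t : ℕ, M.det.eval (t : K) ≠ 0 := by
    by_contra hcon
    push Not at hcon
    apply hne
    apply Polynomial.eq_zero_of_infinite_isRoot
    exact Set.infinite_of_injective_forall_mem (f := fun t : ℕ => (t : K)) Nat.cast_injective hcon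
  rw [hev] at ht
  refine ⟨_, ht, ?_⟩
  have e1 : ((t : K) • (1 + x) + η • (1 - x)).map σ =
      (t : K) • (1 + x.map σ) - η • (1 - x.map σ) := by
    ext i j
    by_cases h : i = j <;> simp [Matrix.one_apply, h, hση] <;> ring
  rw [e1, mul_sub, Matrix.mul_smul, Matrix.mul_smul, mul_add, mul_sub, hx, Matrix.mul_one]
  rw [add_comm x 1, ← neg_sub 1 x, smul_neg, sub_neg_eq_add]

theorem orb_of (σ τ : K ≃ₐ[ℚ_[p]] K) (j x x' m z : Matrix (Fin n) (Fin n) K)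
    (hm : m.det ≠ 0) (hz : z.det ≠ 0) (hx : m = x * m.map σ) (hx' : z = x' * z.map σ)
    (h : (m.map τ)ᵀ * j * m = (z.map τ)ᵀ * j * z) :
    ∃ g : Matrix (Fin n) (Fin n) K, (IsUnit g ∧ (g.map τ)ᵀ * j * g = j) ∧
      x' = g * x * (g.map σ)⁻¹ := by
  have hmu : IsUnit m.det := isUnit_iff_ne_zero.2 hm
  have hg0 : (z * m⁻¹).det ≠ 0 := by
    rw [Matrix.det_mul, Matrix.det_nonsing_inv]
    simp [hm, hz]
  obtain ⟨g, hg, hgd⟩ : ∃ g : Matrix (Fin n) (Fin n) K, g * m = z ∧ g.det ≠ 0 :=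
    ⟨z * m⁻¹, by rw [Matrix.mul_assoc, Matrix.nonsing_inv_mul _ hmu, Matrix.mul_one], hg0⟩
  have hmi : IsUnit m := (Matrix.isUnit_iff_isUnit_det m).2 hmu
  have hmσ : IsUnit (m.map σ) := by
    rw [Matrix.isUnit_iff_isUnit_det, detmap]
    simpa using hm
  have hmτ : IsUnit (m.map τ)ᵀ := by
    rw [Matrix.isUnit_iff_isUnit_det, Matrix.det_transpose, detmap]
    simpa using hm
  have hgσ : IsUnit (g.map σ).det := by
    rw [detmap]
    simpa using hgd
  refine ⟨g, ⟨(Matrix.isUnit_iff_isUnit_det g).2 (isUnit_iff_ne_zero.2 hgd), ?_⟩, ?_⟩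
  · apply hmτ.mul_left_cancel
    apply hmi.mul_right_cancel
    rw [h, ← hg, trmul]
    simp only [Matrix.mul_assoc]
  · have e : x' * g.map σ = g * x := by
      apply hmσ.mul_right_cancel
      rw [Matrix.mul_assoc, ← mapmul, hg, ← hx', Matrix.mul_assoc, ← hx, hg]
    rw [← e, Matrix.mul_assoc, Matrix.mul_nonsing_inv _ hgσ, Matrix.mul_one]

end mat

section trans
variable (p : ℕ) [Fact p.Prime] {K : Type} [Field K] [Algebra ℚ_[p] K] [FiniteDimensional ℚ_[p] K]

@[reducible] noncomputable def starF (σ τ : K ≃ₐ[ℚ_[p]] K) (hτ2 : ∀ x, τ (τ x) = x) (hc : ∀ x, σ (τ x) = τ (σ x)) :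
    StarRing (fixI p K σ σ) where
  star := fun x => ⟨τ x, by rw [mem_fixI, hc, x.2.1]; exact ⟨rfl, rfl⟩⟩
  star_involutive := fun x => Subtype.ext (hτ2 x)
  star_mul := fun x y => Subtype.ext (by
    change τ ((x : K) * (y : K)) = τ y * τ x
    rw [map_mul, mul_comm])
  star_add := fun x y => Subtype.ext (map_add τ (x : K) (y : K))

/-- lift a matrix with `σ`-fixed entries. -/
noncomputable def liftMx (σ : K ≃ₐ[ℚ_[p]] K) {n : ℕ} (y : Matrix (Fin n) (Fin n) K) (h : ∀ a b, σ (y a b) = y a b) :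
    Matrix (Fin n) (Fin n) (fixI p K σ σ) := Matrix.of fun a b => ⟨y a b, h a b, h a b⟩

theorem herm_cls (σ τ : K ≃ₐ[ℚ_[p]] K) (hτ2 : ∀ x, τ (τ x) = x) (hc : ∀ x, σ (τ x) = τ (σ x))
    (δ : K) (hδ0 : δ ≠ 0) (hσδ : σ δ = δ) (hτδ : τ δ = -δ)
    (ε u : K) (hu0 : u ≠ 0) (hσu : σ u = u) (hτu : τ u * ε = u) {n : ℕ}
    (y y' : Matrix (Fin n) (Fin n) K) (hy : ∀ a b, σ (y a b) = y a b)
    (hy' : ∀ a b, σ (y' a b) = y' a b) (hε : (y.map τ)ᵀ = ε • y) (hε' : (y'.map τ)ᵀ = ε • y')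
    (hd : y.det ≠ 0) (z : K) (hz0 : z ≠ 0) (hσz : σ z = z) (hdet : y'.det = y.det * (z * τ z)) :
    ∃ P : Matrix (Fin n) (Fin n) K, P.det ≠ 0 ∧ P.map σ = P ∧ (P.map τ)ᵀ * y * P = y' := by
  let _ : StarRing (fixI p K σ σ) := starF p σ τ hτ2 hc
  have hstar : ∀ x : fixI p K σ σ, ((star x : fixI p K σ σ) : K) = τ x := fun x => rfl
  have : CharZero (fixI p K σ σ) := char0 p _
  have hU : ∀ a b : fixI p K σ σ, a ≠ 0 → b ≠ 0 → star a = a → star b = b →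
      ∃ x y : fixI p K σ σ, a * (x * star x) + b * (y * star y) = 1 := by
    intro a b ha hb hsa hsb
    obtain ⟨x, y, hx, hy, h⟩ := univ2 p hτ2 hc δ hδ0 hσδ hτδ a b
      (fun h => ha (Subtype.ext h)) (fun h => hb (Subtype.ext h)) a.2.1 (congrArg Subtype.val hsa)
      b.2.1 (congrArg Subtype.val hsb)
    exact ⟨⟨x, hx, hx⟩, ⟨y, hy, hy⟩, Subtype.ext h⟩
  have hyu : ∀ a b, σ ((u • y) a b) = (u • y) a b := by
    intro a b; simp [hσu, hy]
  have hyu' : ∀ a b, σ ((u • y') a b) = (u • y') a b := by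
    intro a b; simp [hσu, hy']
  have hherm : ∀ (y : Matrix (Fin n) (Fin n) K) (h : ∀ a b, σ ((u • y) a b) = (u • y) a b),
      (y.map τ)ᵀ = ε • y → (liftMx p σ (u • y) h)ᴴ = liftMx p σ (u • y) h := by
    intro y h he
    ext a b
    have := congrFun (congrFun he a) b
    simp only [Matrix.transpose_apply, Matrix.map_apply, Matrix.smul_apply, smul_eq_mul] at this
    change τ ((u • y) b a) = (u • y) a b
    simp only [Matrix.smul_apply, smul_eq_mul, map_mul, this]
    rw [← mul_assoc, hτu]
  have hdl : ∀ (M : Matrix (Fin n) (Fin n) (fixI p K σ σ)),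
      ((M.det : fixI p K σ σ) : K) = (M.map (fun x => (x : K))).det := by
    intro M
    exact RingHom.map_det (fixI p K σ σ).val.toRingHom M
  have hdl' : ∀ (y : Matrix (Fin n) (Fin n) K) (h : ∀ a b, σ ((u • y) a b) = (u • y) a b),
      (((liftMx p σ (u • y) h).det : fixI p K σ σ) : K) = u ^ n * y.det := by
    intro y h
    rw [hdl]
    have : (liftMx p σ (u • y) h).map (fun x => (x : K)) = u • y := by ext a b; rfl
    rw [this, Matrix.det_smul, Fintype.card_fin]
  obtain ⟨P, hP, e⟩ := hcls_fin hU n (liftMx p σ (u • y) hyu) (liftMx p σ (u • y') hyu')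
    ⟨z, hσz, hσz⟩ (hherm y hyu hε) (hherm y' hyu' hε')
    (by
      intro h
      have := congrArg Subtype.val h
      rw [hdl'] at this
      exact mul_ne_zero (pow_ne_zero _ hu0) hd this)
    (fun h => hz0 (congrArg Subtype.val h))
    (by
      apply Subtype.ext
      rw [hdl', hdet]
      change _ = (((liftMx p σ (u • y) hyu).det : fixI p K σ σ) : K) * (z * τ z)
      rw [hdl']; ring)
  refine ⟨P.map (fun x => (x : K)), ?_, ?_, ?_⟩
  · rw [← hdl]
    exact fun h => hP (Subtype.ext h)
  · ext a b
    exact (P a b).2.1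
  · have e2 : ((P.map (fun x => (x : K))).map τ)ᵀ * (u • y) * (P.map (fun x => (x : K))) = u • y' := by
      ext a b
      have := congrArg Subtype.val (congrFun (congrFun e a) b)
      simp only [Matrix.mul_apply, AddSubmonoidClass.coe_finsetSum, MulMemClass.coe_mul] at this
      simp only [Matrix.mul_apply]
      exact this
    rw [Matrix.mul_smul, Matrix.smul_mul] at e2
    exact smul_right_injective _ hu0 e2

theorem refl_ex (σ τ : K ≃ₐ[ℚ_[p]] K) (hτ2 : ∀ x, τ (τ x) = x) (hc : ∀ x, σ (τ x) = τ (σ x))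
    (ε u : K) (hu0 : u ≠ 0) (hσu : σ u = u) (hτu : τ u * ε = u) {n : ℕ} (hn : 1 ≤ n)
    (y : Matrix (Fin n) (Fin n) K) (hy : ∀ a b, σ (y a b) = y a b)
    (hε : (y.map τ)ᵀ = ε • y) (hd : y.det ≠ 0) :
    ∃ R : Matrix (Fin n) (Fin n) K, R * R = R ∧ R.map σ = R ∧ (R.map τ)ᵀ * y = y * R ∧
      ∀ t : K, (1 + t • R).det = 1 + t := by
  let _ : StarRing (fixI p K σ σ) := starF p σ τ hτ2 hc
  have : CharZero (fixI p K σ σ) := char0 p _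
  have : Nonempty (Fin n) := ⟨⟨0, hn⟩⟩
  have hyu : ∀ a b, σ ((u • y) a b) = (u • y) a b := by
    intro a b; simp [hσu, hy]
  set J := liftMx p σ (u • y) hyu with hJ
  have hherm : Jᴴ = J := by
    ext a b
    have := congrFun (congrFun hε a) b
    simp only [Matrix.transpose_apply, Matrix.map_apply, Matrix.smul_apply, smul_eq_mul] at this
    change τ ((u • y) b a) = (u • y) a b
    simp only [Matrix.smul_apply, smul_eq_mul, map_mul, this]
    rw [← mul_assoc, hτu]
  have hdl : ∀ (M : Matrix (Fin n) (Fin n) (fixI p K σ σ)),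
      ((M.det : fixI p K σ σ) : K) = (M.map (fun x => (x : K))).det := by
    intro M
    exact RingHom.map_det (fixI p K σ σ).val.toRingHom M
  have hJd : J.det ≠ 0 := by
    intro h
    have := congrArg Subtype.val h
    rw [hdl] at this
    have e : J.map (fun x => (x : K)) = u • y := by ext a b; rfl
    rw [e, Matrix.det_smul] at this
    exact mul_ne_zero (pow_ne_zero _ hu0) hd this
  obtain ⟨v, hv⟩ := exists_q J hherm hJd
  set q := star v ⬝ᵥ J *ᵥ v with hq
  have hsq : star q = q := by
    rw [hq, ← Matrix.star_dotProduct_star, star_star, Matrix.star_mulVec, hherm,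
      ← Matrix.dotProduct_mulVec]
  set r : Fin n → fixI p K σ σ := q⁻¹ • (star v ᵥ* J) with hr
  have hrv : r ⬝ᵥ v = 1 := by
    rw [hr, smul_dotProduct, ← Matrix.dotProduct_mulVec, ← hq, smul_eq_mul, inv_mul_cancel₀ hv]
  set R := Matrix.vecMulVec v r with hR
  have hRR : R * R = R := by
    rw [hR, Matrix.vecMulVec_mul_vecMulVec, hrv, one_smul]
  have hRJ : Rᴴ * J = J * R := by
    rw [hR, Matrix.conjTranspose_vecMulVec, Matrix.vecMulVec_mul, Matrix.mul_vecMulVec, hr, star_smul,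
      Matrix.star_vecMul, star_star, hherm, star_inv₀, hsq, Matrix.smul_vecMulVec,
      Matrix.vecMulVec_smul]
  refine ⟨R.map (fun x => (x : K)), ?_, ?_, ?_, ?_⟩
  · ext a b
    have := congrArg Subtype.val (congrFun (congrFun hRR a) b)
    simp only [Matrix.mul_apply, AddSubmonoidClass.coe_finsetSum, MulMemClass.coe_mul] at this
    simp only [Matrix.mul_apply]
    exact this
  · ext a b
    exact (R a b).2.1
  · have e2 : ((R.map (fun x => (x : K))).map τ)ᵀ * (u • y) = (u • y) * (R.map (fun x => (x : K))) := by
      ext a b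
      have := congrArg Subtype.val (congrFun (congrFun hRJ a) b)
      simp only [Matrix.mul_apply, AddSubmonoidClass.coe_finsetSum, MulMemClass.coe_mul] at this
      simp only [Matrix.mul_apply]
      exact this
    rw [Matrix.mul_smul, Matrix.smul_mul] at e2
    exact smul_right_injective _ hu0 e2
  · intro t
    have e : t • R.map (fun x => (x : K)) =
        replicateCol Unit (fun i => t * (v i : K)) * replicateRow Unit (fun i => (r i : K)) := by
      ext a b
      simp [hR, Matrix.vecMulVec_apply, Matrix.mul_apply, mul_assoc]
    rw [e, Matrix.det_one_add_replicateCol_mul_replicateRow]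
    have := congrArg Subtype.val hrv
    simp only [dotProduct, AddSubmonoidClass.coe_finsetSum, MulMemClass.coe_mul] at this
    simp only [dotProduct]
    congr 1
    calc _ = t * ∑ i, (r i : K) * (v i : K) := by
          rw [Finset.mul_sum]; apply Finset.sum_congr rfl; intro i _; ring
      _ = t := by rw [this]; simp
end trans

section fin
set_option linter.unusedSectionVars false
variable {p : ℕ} [Fact p.Prime] {K : Type} [Field K] [Algebra ℚ_[p] K] [FiniteDimensional ℚ_[p] K]

theorem ex_del (σ τ : K ≃ₐ[ℚ_[p]] K) (hσ2 : ∀ x, σ (σ x) = x) (hτ2 : ∀ x, τ (τ x) = x)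
    (hc : ∀ x, σ (τ x) = τ (σ x)) (hσ1 : σ ≠ 1) (hτ1 : τ ≠ 1) (hστ : σ ≠ τ) :
    ∃ δ : K, δ ≠ 0 ∧ σ δ = δ ∧ τ δ = -δ := by
  have := char0 p K
  by_cases hu : ∃ u, σ u = u ∧ τ u ≠ u
  · obtain ⟨u, h1, h2⟩ := hu
    refine ⟨u - τ u, fun h => h2 (sub_eq_zero.1 h).symm, ?_, ?_⟩
    · rw [map_sub, hc, h1]
    · rw [map_sub, hτ2]; ring
  exfalso
  push Not at hu
  obtain ⟨u0, hu0⟩ : ∃ u, σ u ≠ u := by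
    by_contra h
    push Not at h
    exact hσ1 (AlgEquiv.ext h)
  obtain ⟨α, hα, hα0⟩ : ∃ α, σ α = -α ∧ α ≠ 0 :=
    ⟨u0 - σ u0, by rw [map_sub, hσ2]; ring, fun h => hu0 (sub_eq_zero.1 h).symm⟩
  have hsq : τ (α * α) = α * α := hu _ (by rw [map_mul, hα]; ring)
  have hpm : τ α = α ∨ τ α = -α := by
    rw [map_mul] at hsq
    exact mul_self_eq_mul_self_iff.1 hsq
  have h2 : (2 : K) ≠ 0 := two_ne_zero
  have hσ2' : σ (2 : K) = 2 := map_ofNat σ 2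
  have hdec : ∀ x, x = (x + σ x) / 2 + (x - σ x) / (2 * α) * α := by
    intro x; field_simp; ring
  have ha : ∀ x, σ ((x + σ x) / 2) = (x + σ x) / 2 := by
    intro x; rw [map_div₀, map_add, hσ2, hσ2', add_comm]
  have hb : ∀ x, σ ((x - σ x) / (2 * α)) = (x - σ x) / (2 * α) := by
    intro x; rw [map_div₀, map_sub, hσ2, map_mul, hσ2', hα]; field_simp; ring
  rcases hpm with h | h
  · apply hτ1
    ext x
    rw [hdec x, map_add, map_mul, hu _ (ha x), hu _ (hb x), h]
    rfl
  · apply hστ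
    ext x
    rw [hdec x, map_add, map_mul, map_add, map_mul, hu _ (ha x), hu _ (hb x), h, hα, ha, hb]

theorem gam_iff (σ τ : K ≃ₐ[ℚ_[p]] K) (hc : ∀ x, σ (τ x) = τ (σ x)) (z : K) (hz : z ≠ 0) :
    z * (σ z)⁻¹ ∈ Gam ⇑σ ⇑τ ↔ ∃ w, σ w = w ∧ z * τ z = w * τ w := by
  have hσz : σ z ≠ 0 := by simpa using hz
  have hτz : τ z ≠ 0 := by simpa using hz
  constructor
  · rintro ⟨a, ha, e⟩
    have ha0 : a ≠ 0 := by rintro rfl; simp at ha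
    have hτa : τ a ≠ 0 := by simpa using ha0
    have hσa : σ a ≠ 0 := by simpa using ha0
    refine ⟨z / a, ?_, ?_⟩
    · rw [map_div₀]
      field_simp at e ⊢
      linear_combination -e
    · rw [map_div₀]
      field_simp
      linear_combination ha
  · rintro ⟨w, hw, e⟩
    have hw0 : w ≠ 0 := by
      rintro rfl
      simp [hz] at e
    have hτw : τ w ≠ 0 := by simpa using hw0
    refine ⟨z / w, ?_, ?_⟩
    · rw [map_div₀]
      field_simp
      exact e
    · rw [map_div₀, hw]
      field_simp

theorem gam_sub (σ τ : K ≃ₐ[ℚ_[p]] K) (hσ2 : ∀ x, σ (σ x) = x)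
    (hc : ∀ x, σ (τ x) = τ (σ x)) : Gam ⇑σ ⇑τ ⊆ oneInter ⇑σ ⇑τ := by
  rintro _ ⟨a, ha, rfl⟩
  have ha0 : a ≠ 0 := by rintro rfl; simp at ha
  have hσa : σ a ≠ 0 := by simpa using ha0
  have h1 : σ a * τ (σ a) = 1 := by rw [← hc, ← map_mul, ha, map_one]
  have hτa : τ (σ a) ≠ 0 := by simpa using ha0
  constructor
  · rw [map_mul, map_inv₀]
    field_simp
    rw [ha, h1]
  · rw [map_mul, map_inv₀, hσ2]
    field_simp

theorem sc90 (σ : K ≃ₐ[ℚ_[p]] K) (hσ2 : ∀ x, σ (σ x) = x) (η : K) (hη0 : η ≠ 0) (hση : σ η = -η)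
    (c : K) (h : c * σ c = 1) : ∃ z, z ≠ 0 ∧ c = z * (σ z)⁻¹ := by
  by_cases hcm : 1 + c = 0
  · refine ⟨η, hη0, ?_⟩
    rw [hση]
    have : c = -1 := by linear_combination hcm
    rw [this]
    field_simp
  · refine ⟨1 + c, hcm, ?_⟩
    have : σ (1 + c) ≠ 0 := by simpa only [ne_eq, map_eq_zero] using hcm
    rw [eq_mul_inv_iff_mul_eq₀ this, map_add, map_one]
    linear_combination h

theorem det90 (σ τ : K ≃ₐ[ℚ_[p]] K) (hc : ∀ x, σ (τ x) = τ (σ x)) (z : K) (hz : z ≠ 0)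
    (h : (z * (σ z)⁻¹) * τ (z * (σ z)⁻¹) = 1) : σ (z * τ z) = z * τ z := by
  have hσz : σ z ≠ 0 := by simpa using hz
  have hτz : τ (σ z) ≠ 0 := by simpa using hz
  rw [map_mul, map_inv₀] at h
  rw [map_mul, hc]
  field_simp at h
  exact h.symm

theorem orb_key (σ τ : K ≃ₐ[ℚ_[p]] K) (hτ2 : ∀ x, τ (τ x) = x) (hc : ∀ x, σ (τ x) = τ (σ x))
    (δ : K) (hδ0 : δ ≠ 0) (hσδ : σ δ = δ) (hτδ : τ δ = -δ)
    (ε u : K) (hu0 : u ≠ 0) (hσu : σ u = u) (hτu : τ u * ε = u)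
    {n : ℕ} (j : Matrix (Fin n) (Fin n) K) (hj : inYnF ⇑σ ⇑τ ε j)
    (x x' z z' : Matrix (Fin n) (Fin n) K) (hx : Xj ⇑σ ⇑τ j x) (hx' : Xj ⇑σ ⇑τ j x')
    (hz : z.det ≠ 0) (hz' : z'.det ≠ 0) (e : z = x * z.map σ) (e' : z' = x' * z'.map σ)
    (w : K) (hw0 : w ≠ 0) (hσw : σ w = w)
    (hd : z'.det * τ z'.det = z.det * τ z.det * (w * τ w)) : orbGj ⇑σ ⇑τ j x x' := by
  obtain ⟨hju, hjσ, hjτ⟩ := hj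
  have hjd : j.det ≠ 0 := ((Matrix.isUnit_iff_isUnit_det j).1 hju).ne_zero
  have hjσ' : j.map σ = j := by ext a b; exact hjσ a b
  have hjτ' : (ε • j).map τ = jᵀ := by
    rw [← hjτ]; ext a b; exact hτ2 _
  have fixy : ∀ x z : Matrix (Fin n) (Fin n) K, Xj ⇑σ ⇑τ j x → z = x * z.map σ →
      ∀ a b, σ (((z.map τ)ᵀ * j * z) a b) = ((z.map τ)ᵀ * j * z) a b := by
    intro x z hx e a b
    have : ((z.map τ)ᵀ * j * z).map σ = (z.map τ)ᵀ * j * z := by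
      have h1 : ((z.map τ)ᵀ).map σ = ((z.map σ).map τ)ᵀ := by
        ext a b; exact hc _
      rw [mapmul, mapmul, hjσ', h1]
      conv_rhs => rw [e, trmul]
      have := hx.1.2
      calc _ = ((z.map σ).map τ)ᵀ * ((x.map τ)ᵀ * j * x) * z.map σ := by rw [this]
        _ = _ := by simp only [Matrix.mul_assoc]
    exact congrFun (congrFun this a) b
  have hermy : ∀ z : Matrix (Fin n) (Fin n) K,
      (((z.map τ)ᵀ * j * z).map τ)ᵀ = ε • ((z.map τ)ᵀ * j * z) := by
    intro z
    have h1 : (((z.map τ)ᵀ).map τ)ᵀ = z := by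
      ext a b; exact hτ2 _
    rw [trmul, trmul, h1, hjτ, Matrix.smul_mul, Matrix.mul_smul, Matrix.mul_assoc]
  have dety : ∀ z : Matrix (Fin n) (Fin n) K,
      ((z.map τ)ᵀ * j * z).det = j.det * (z.det * τ z.det) := by
    intro z
    rw [Matrix.det_mul, Matrix.det_mul, Matrix.det_transpose, detmap]; ring
  obtain ⟨P, hP, hPσ, hPe⟩ := herm_cls p σ τ hτ2 hc δ hδ0 hσδ hτδ ε u hu0 hσu hτu
    ((z.map τ)ᵀ * j * z) ((z'.map τ)ᵀ * j * z') (fixy x z hx e) (fixy x' z' hx' e')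
    (hermy z) (hermy z') (by
      rw [dety]
      exact mul_ne_zero hjd (mul_ne_zero hz (by simpa using hz))) w hw0 hσw
    (by rw [dety, dety, hd]; ring)
  refine orb_of σ τ j x x' (z * P) z' ?_ hz' ?_ e' ?_
  · rw [Matrix.det_mul]; exact mul_ne_zero hz hP
  · rw [mapmul, hPσ, ← Matrix.mul_assoc, ← e]
  · rw [← hPe, trmul]; simp only [Matrix.mul_assoc]

theorem refl_X (σ τ : K ≃ₐ[ℚ_[p]] K) {n : ℕ} (j R : Matrix (Fin n) (Fin n) K) 
    (hRR : R * R = R) (hRσ : R.map σ = R) (hRj : (R.map τ)ᵀ * j = j * R)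
    (hRd : ∀ t : K, (1 + t • R).det = 1 + t) (b : K) (hb1 : b * τ b = 1) (hb2 : b * σ b = 1) :
    Xj ⇑σ ⇑τ j (1 + (b - 1) • R) := by
  have hb0 : b ≠ 0 := by rintro rfl; simp at hb1
  refine ⟨⟨?_, ?_⟩, ?_⟩
  · rw [Matrix.isUnit_iff_isUnit_det, hRd]
    simpa using hb0
  · have e : ((1 + (b - 1) • R).map τ)ᵀ = 1 + (τ b - 1) • (R.map τ)ᵀ := by
      ext a c
      by_cases h : a = c
      · subst h; simp
      · simp [h, Ne.symm h]
    rw [e, add_mul, one_mul, Matrix.smul_mul, hRj, mul_add, mul_one, Matrix.mul_smul, add_mul,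
      Matrix.smul_mul, Matrix.mul_assoc, hRR]
    have : j + (τ b - 1) • (j * R) + (b - 1) • (j * R + (τ b - 1) • (j * R)) =
      j + (b * τ b - 1) • (j * R) := by module
    rw [this, hb1, sub_self, zero_smul, add_zero]
  · have e : (1 + (b - 1) • R).map σ = 1 + (σ b - 1) • R := by
      conv_rhs => rw [← hRσ]
      ext a c
      by_cases h : a = c
      · subst h; simp
      · simp [h]
    rw [e, add_mul, one_mul, Matrix.smul_mul, mul_add, mul_one, Matrix.mul_smul, hRR]
    have : 1 + (σ b - 1) • R + (b - 1) • (R + (σ b - 1) • R) =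
      1 + (b * σ b - 1) • R := by module
    rw [this, hb2, sub_self, zero_smul, add_zero]

end fin


/-- In the unitary case, the subgroup `Γ = {a·σ(a)⁻¹ : a ∈ (E'/E)₁}` has
index two in the group `(E'/E)₁ ∩ (E'/F')₁`, and the two `G^j(E)`-orbits in `X^j` are
`{x ∈ X^j : det x ∈ Γ} = G^j(E)·I_n` and `{x ∈ X^j : det x ∉ Γ}`. -/
theorem stmt_7 (p : ℕ) [Fact p.Prime]
    (E' : Type) [Field E'] [Algebra ℚ_[p] E'] [FiniteDimensional ℚ_[p] E']
    (σ τ : E' ≃ₐ[ℚ_[p]] E')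
    (hσ2 : σ * σ = 1) (hτ2 : τ * τ = 1) (hcomm : σ * τ = τ * σ)
    (hσ1 : σ ≠ 1) (hτ1 : τ ≠ 1) (hστ : σ ≠ τ)
    (ε : E') (hε : ε = 1 ∨ ε = -1)
    (n : ℕ) (hn : 1 ≤ n)
    (j : Matrix (Fin n) (Fin n) E')
    (hj : inYnF ⇑σ ⇑τ ε j) :
    -- Γ is a subgroup of (E'/E)₁ ∩ (E'/F')₁ of index two
    (Gam ⇑σ ⇑τ ⊆ oneInter ⇑σ ⇑τ) ∧
    (∃ b, b ∈ oneInter ⇑σ ⇑τ ∧ b ∉ Gam ⇑σ ⇑τ ∧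
      ∀ c ∈ oneInter ⇑σ ⇑τ, c ∈ Gam ⇑σ ⇑τ ∨ c * b⁻¹ ∈ Gam ⇑σ ⇑τ) ∧
    -- {x ∈ X^j : det x ∈ Γ} is exactly the orbit of the identity
    (∀ x, Xj ⇑σ ⇑τ j x → (x.det ∈ Gam ⇑σ ⇑τ ↔ orbGj ⇑σ ⇑τ j 1 x)) ∧
    -- {x ∈ X^j : det x ∉ Γ} is nonempty and is a single orbit
    (∃ x, Xj ⇑σ ⇑τ j x ∧ x.det ∉ Gam ⇑σ ⇑τ) ∧
    (∀ x x', Xj ⇑σ ⇑τ j x → Xj ⇑σ ⇑τ j x' →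
      x.det ∉ Gam ⇑σ ⇑τ → x'.det ∉ Gam ⇑σ ⇑τ → orbGj ⇑σ ⇑τ j x x') := by
  have h1 : ∀ x, σ (σ x) = x := fun x => DFunLike.congr_fun hσ2 x
  have h2 : ∀ x, τ (τ x) = x := fun x => DFunLike.congr_fun hτ2 x
  have hc : ∀ x, σ (τ x) = τ (σ x) := fun x => DFunLike.congr_fun hcomm x
  have hch := char0 p E'
  obtain ⟨δ, hδ0, hσδ, hτδ⟩ := ex_del σ τ h1 h2 hc hσ1 hτ1 hστ
  obtain ⟨η, hη0, hτη, hση⟩ := ex_del τ σ h2 h1 (fun x => (hc x).symm) hτ1 hσ1 (Ne.symm hστ)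
  obtain ⟨u, hu0, hσu, hτu⟩ : ∃ u : E', u ≠ 0 ∧ σ u = u ∧ τ u * ε = u := by
    rcases hε with rfl | rfl
    · exact ⟨1, one_ne_zero, map_one σ, by rw [map_one, one_mul]⟩
    · exact ⟨δ, hδ0, hσδ, by rw [hτδ]; ring⟩
  obtain ⟨⟨c, hc0, hσc, hτc, hcn⟩, hprod⟩ := nm_idx p h2 hc δ hδ0 hσδ hτδ
  obtain ⟨w, hw⟩ := nm_top p h1 h2 hc δ η hδ0 hσδ hτδ hη0 hση hτη c hc0 hσc hτc
  have hnt : ∀ z : E', τ (z * τ z) = z * τ z := fun z => by rw [map_mul, h2, mul_comm]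
  have hnz : ∀ z : E', z ≠ 0 → z * τ z ≠ 0 := fun z hz => mul_ne_zero hz (by simpa using hz)
  have hw0 : w ≠ 0 := by
    rintro rfl
    simp at hw
    exact hc0 hw
  have hσw0 : σ w ≠ 0 := by simpa using hw0
  have hτw0 : τ w ≠ 0 := by simpa using hw0
  have hbG : w * (σ w)⁻¹ ∉ Gam ⇑σ ⇑τ := by
    rw [gam_iff σ τ hc w hw0, ← hw]
    exact hcn
  have hbI : w * (σ w)⁻¹ ∈ oneInter ⇑σ ⇑τ := by
    constructor
    · have e : σ w * τ (σ w) = w * τ w := by rw [← hc, ← map_mul, ← hw, hσc]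
      rw [map_mul, map_inv₀]
      have : τ (σ w) ≠ 0 := by simpa using hw0
      field_simp
      exact e.symm
    · rw [map_mul, map_inv₀, h1]
      field_simp
  have key : ∀ x, Xj ⇑σ ⇑τ j x → ∃ z : Matrix (Fin n) (Fin n) E', z.det ≠ 0 ∧ z = x * z.map σ ∧
      x.det = z.det * (σ z.det)⁻¹ ∧ σ (z.det * τ z.det) = z.det * τ z.det := by
    intro x hx
    obtain ⟨z, hz, e⟩ := mat90 σ η hη0 hση x hx.2
    have hσz : σ z.det ≠ 0 := by simpa using hz
    have e1 : x.det = z.det * (σ z.det)⁻¹ := by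
      rw [eq_mul_inv_iff_mul_eq₀ hσz, ← detmap, ← Matrix.det_mul, ← e]
    refine ⟨z, hz, e, e1, det90 σ τ hc _ hz ?_⟩
    rw [← e1]
    have e2 := congrArg Matrix.det hx.1.2
    rw [Matrix.det_mul, Matrix.det_mul, Matrix.det_transpose, detmap] at e2
    have hjd : j.det ≠ 0 := ((Matrix.isUnit_iff_isUnit_det j).1 hj.1).ne_zero
    apply mul_left_cancel₀ hjd
    linear_combination e2
  refine ⟨gam_sub σ τ h1 hc, ⟨w * (σ w)⁻¹, hbI, hbG, ?_⟩, ?_, ?_, ?_⟩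
  · intro c' hc'
    obtain ⟨z, hz0, rfl⟩ := sc90 σ h1 η hη0 hση c' hc'.2
    by_cases hG : z * (σ z)⁻¹ ∈ Gam ⇑σ ⇑τ
    · exact Or.inl hG
    right
    rw [gam_iff σ τ hc z hz0] at hG
    have hf := det90 σ τ hc z hz0 hc'.1
    obtain ⟨v, hσv, hv⟩ := hprod _ c (hnz z hz0) hc0 hf (hnt z) hσc hτc hG hcn
    have hσz0 : σ z ≠ 0 := by simpa using hz0
    have e : z * (σ z)⁻¹ * (w * (σ w)⁻¹)⁻¹ = (z / w) * (σ (z / w))⁻¹ := by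
      rw [map_div₀]
      field_simp
    rw [e, gam_iff σ τ hc _ (div_ne_zero hz0 hw0)]
    refine ⟨v / c, by rw [map_div₀, hσv, hσc], ?_⟩
    rw [map_div₀, map_div₀, hτc]
    have e3 : z / w * (τ z / τ w) = z * τ z / c := by rw [hw]; field_simp
    have e4 : v / c * (τ v / c) = v * τ v / (c * c) := by field_simp
    rw [e3, e4, ← hv]
    field_simp
  · intro x hx
    constructor
    · intro hG
      obtain ⟨z, hz, e, e1, hf⟩ := key x hx
      rw [e1, gam_iff σ τ hc _ hz] at hG
      obtain ⟨v, hσv, hv⟩ := hG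
      have hX1 : Xj ⇑σ ⇑τ j (1 : Matrix (Fin n) (Fin n) E') := by
        refine ⟨⟨isUnit_one, ?_⟩, ?_⟩
        · rw [mapone, Matrix.transpose_one, one_mul, mul_one]
        · rw [mapone, one_mul]
      have hv0 : v ≠ 0 := by
        rintro rfl
        rw [zero_mul] at hv
        exact hnz _ hz hv
      refine orb_key σ τ h2 hc δ hδ0 hσδ hτδ ε u hu0 hσu hτu j hj 1 x 1 z hX1 hx ?_ hz ?_ e v hv0 hσv ?_
      · rw [Matrix.det_one]; exact one_ne_zero
      · rw [mapone, one_mul]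
      · rw [Matrix.det_one, map_one, hv]; ring
    · rintro ⟨g, hg, rfl⟩
      refine ⟨g.det, ?_, ?_⟩
      · have e2 := congrArg Matrix.det hg.2
        rw [Matrix.det_mul, Matrix.det_mul, Matrix.det_transpose, detmap] at e2
        have hjd : j.det ≠ 0 := ((Matrix.isUnit_iff_isUnit_det j).1 hj.1).ne_zero
        apply mul_left_cancel₀ hjd
        linear_combination e2
      · rw [mul_one, Matrix.det_mul, Matrix.det_nonsing_inv, detmap, Ring.inverse_eq_inv']
  · have hjd : j.det ≠ 0 := ((Matrix.isUnit_iff_isUnit_det j).1 hj.1).ne_zero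
    obtain ⟨R, hRR, hRσ, hRj, hRd⟩ := refl_ex p σ τ h2 hc ε u hu0 hσu hτu hn j hj.2.1 hj.2.2 hjd
    refine ⟨_, refl_X σ τ j R hRR hRσ hRj hRd _ hbI.1 hbI.2, ?_⟩
    rw [hRd, add_sub_cancel]
    exact hbG
  · intro x x' hx hx' hG hG'
    obtain ⟨z, hz, e, e1, hf⟩ := key x hx
    obtain ⟨z', hz', e', e1', hf'⟩ := key x' hx'
    rw [e1, gam_iff σ τ hc _ hz] at hG
    rw [e1', gam_iff σ τ hc _ hz'] at hG'
    obtain ⟨v, hσv, hv⟩ := hprod _ _ (hnz _ hz) (hnz _ hz') hf (hnt _) hf' (hnt _) hG hG'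
    have hA := hnz _ hz
    have hv0 : v ≠ 0 := by
      rintro rfl
      rw [zero_mul] at hv
      exact mul_ne_zero hA (hnz _ hz') hv
    have hA2 := hnt z.det
    generalize hAe : z.det * τ z.det = A at *
    refine orb_key σ τ h2 hc δ hδ0 hσδ hτδ ε u hu0 hσu hτu j hj x x' z z' hx hx' hz hz' e e'
      (v / A) (div_ne_zero hv0 hA) (by rw [map_div₀, hσv, hf]) ?_
    rw [map_div₀, hAe, hA2]
    have e4 : v / A * (τ v / A) = v * τ v / (A * A) := by field_simp
    rw [e4, ← hv]
    field_simp
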